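/- arXiv:0707.3598 — 5 statements merged into one kernel-verified Lean document; each statement's English description precedes it below -/
import Mathlib

section
/- Fix φ ∈ (−π/2, π/2). Then the function θ ↦ U(θ, φ) is strictly decreasing on the interval (0, π/(2l)) and strictly increasing on the interval (π/(2l), π/l). -/
open Real Finset

/-- The reduced dihedral potential on the shape sphere. -/
noncomputable def dihedralU (l : ℕ) (α : ℝ) (θ φ : ℝ) : ℝ :=
  (2 * Real.cos φ) ^ (-α) *
    ((∑ j ∈ Finset.Icc 1 (l - 1), Real.sin ((j : ℝ) * Real.pi / l) ^ (-α)) +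
      ∑ j ∈ Finset.Icc 1 l,
        (Real.sin ((j : ℝ) * Real.pi / l - θ) ^ 2 + Real.tan φ ^ 2) ^ (-α / 2))

/-!
Put `a_j = 2 (j π / l - θ)`. The `θ`-dependent part of the potential is a positive multiple of
`∑ F (cos a_j)`, where `F u = (c - u) ^ (-α / 2)` and `c = 1 + 2 tan² φ`. Since
`cos (l a_j) = cos (2lθ)`, the nodes `cos a_j` are the roots of `T_l - cos (2lθ)`, whose derivative
at `cos a_j` is `-l sin (2lθ) / sin a_j`. Hence the `θ`-derivative `2 ∑ F' (cos a_j) sin a_j` is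
`-sin (2lθ)` times a positive multiple of the divided difference of `F'` at the `l` nodes. By
Rolle's theorem this divided difference is a positive multiple of a value of `F⁽ˡ⁾`, and every
derivative of `F` is positive on `u < c`.
-/

section IteratedRolle

variable {f : ℝ → ℝ} {I : Set ℝ} {Z : Finset ℝ}

theorem exists_finset_deriv_eq_zero (hI : I.OrdConnected) (hf : ContinuousOn f I)
    (hZI : ↑Z ⊆ I) (hZ : ∀ z ∈ Z, f z = 0) :
    ∃ Z' : Finset ℝ, ↑Z' ⊆ I ∧ (∀ z ∈ Z', deriv f z = 0) ∧ #Z ≤ #Z' + 1 := by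
  have rolle (x) (hx : x ∈ Z) (y) (hy : y ∈ Z) (hxy : x < y) :
      ∃ c ∈ Set.Ioo x y, deriv f c = 0 :=
    exists_deriv_eq_zero hxy (hf.mono (hI.out (hZI hx) (hZI hy))) ((hZ x hx).trans (hZ y hy).symm)
  choose! c hc hc' using rolle
  refine ⟨{p ∈ Z ×ˢ Z | p.1 < p.2}.image fun p ↦ c p.1 p.2, ?_, ?_, ?_⟩
  · simp only [Set.subset_def, mem_coe, mem_image, mem_filter, mem_product]
    rintro _ ⟨⟨x, y⟩, ⟨⟨hx, hy⟩, hxy⟩, rfl⟩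
    exact hI.out (hZI hx) (hZI hy) (Set.Ioo_subset_Icc_self (hc x hx y hy hxy))
  · simp only [mem_image, mem_filter, mem_product]
    rintro _ ⟨⟨x, y⟩, ⟨⟨hx, hy⟩, hxy⟩, rfl⟩
    exact hc' x hx y hy hxy
  · refine card_le_of_interleaved fun x hx y hy hxy _ ↦ ⟨c x y, ?_, hc x hx y hy hxy⟩
    exact mem_image.2 ⟨(x, y), by simp [hx, hy, hxy], rfl⟩

theorem exists_iteratedDeriv_eq_zero (hIo : IsOpen I) (hI : I.OrdConnected) {n : ℕ}
    (hf : ContDiffOn ℝ n f I) (hZI : ↑Z ⊆ I) (hZ : ∀ z ∈ Z, f z = 0) (hn : n < #Z) :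
    ∃ ξ ∈ I, iteratedDeriv n f ξ = 0 := by
  induction n generalizing f Z with
  | zero =>
    obtain ⟨z, hz⟩ := card_pos.1 hn
    exact ⟨z, hZI hz, by simpa using hZ z hz⟩
  | succ n ih =>
    obtain ⟨Z', hZ'I, hZ', hcard⟩ := exists_finset_deriv_eq_zero hI hf.continuousOn hZI hZ
    obtain ⟨ξ, hξ, h⟩ := ih (hf.deriv_of_isOpen hIo (by norm_cast)) hZ'I hZ' (by lia)
    exact ⟨ξ, hξ, by rwa [iteratedDeriv_succ']⟩

end IteratedRolle

section DividedDiff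

/-- The divided difference `f[vᵢ : i ∈ s]` in Lagrange form. With the junk value `x / 0 = 0`, it is
meaningful only when `v` is injective on `s`. -/
noncomputable def dividedDiff {ι K : Type*} [DecidableEq ι] [Field K] (s : Finset ι) (v : ι → K)
    (f : K → K) : K :=
  ∑ i ∈ s, f (v i) / ∏ j ∈ s.erase i, (v i - v j)

variable {ι : Type*} [DecidableEq ι] {s : Finset ι}

theorem eval_iterate_derivative_interpolate {K : Type*} [Field K] {v : ι → K} {n : ℕ}
    (hs : #s = n + 1) (hv : Set.InjOn v s) (f : K → K) (x : K) :
    (Polynomial.derivative^[n] (Lagrange.interpolate s v (f ∘ v))).eval x =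
      n.factorial * dividedDiff s v f := by
  rw [Lagrange.eval_iterate_derivative_eq_sum hv (Lagrange.degree_interpolate_lt _ hv) (by lia)]
  simp only [hs, Nat.sub_self, powersetCard_zero, sum_singleton, prod_empty, mul_one, dividedDiff]
  congr! 3 with i hi
  exact Lagrange.eval_interpolate_at_node _ hv hi

theorem iteratedDeriv_polynomial_eval (P : Polynomial ℝ) (n : ℕ) :
    iteratedDeriv n (fun x ↦ P.eval x) = fun x ↦ (Polynomial.derivative^[n] P).eval x := by
  induction n generalizing P with
  | zero => simp
  | succ n ih =>
    have hderiv : deriv (fun x ↦ P.eval x) = fun x ↦ P.derivative.eval x := funext fun _ ↦ P.deriv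
    rw [iteratedDeriv_succ', hderiv, ih, Function.iterate_succ_apply]

variable {v : ι → ℝ} {f : ℝ → ℝ} {I : Set ℝ} {n : ℕ}

theorem exists_iteratedDeriv_eq_factorial_mul_dividedDiff (hIo : IsOpen I) (hI : I.OrdConnected)
    (hf : ContDiffOn ℝ n f I) (hs : #s = n + 1) (hv : Set.InjOn v s) (hvI : Set.MapsTo v s I) :
    ∃ ξ ∈ I, iteratedDeriv n f ξ = n.factorial * dividedDiff s v f := by
  let P := Lagrange.interpolate s v (f ∘ v)
  have hP : ContDiff ℝ n fun x ↦ P.eval x := P.contDiff_aeval n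
  have hzero : ∀ z ∈ s.image v, f z - P.eval z = 0 := by
    simp only [mem_image]
    rintro _ ⟨i, hi, rfl⟩
    exact sub_eq_zero.2 (Lagrange.eval_interpolate_at_node (f ∘ v) hv hi).symm
  obtain ⟨ξ, hξ, h⟩ := exists_iteratedDeriv_eq_zero (Z := s.image v) hIo hI (hf.sub hP.contDiffOn)
    (by simpa [Set.MapsTo, Set.subset_def] using hvI)
    hzero (by rw [card_image_of_injOn hv]; lia)
  refine ⟨ξ, hξ, ?_⟩
  rw [iteratedDeriv_fun_sub (hf.contDiffAt (hIo.mem_nhds hξ)) hP.contDiffAt,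
    iteratedDeriv_polynomial_eval, sub_eq_zero] at h
  exact h.trans (eval_iterate_derivative_interpolate hs hv f ξ)

theorem dividedDiff_pos (hIo : IsOpen I) (hI : I.OrdConnected) (hf : ContDiffOn ℝ n f I)
    (hf' : ∀ x ∈ I, 0 < iteratedDeriv n f x) (hs : #s = n + 1) (hv : Set.InjOn v s)
    (hvI : Set.MapsTo v s I) : 0 < dividedDiff s v f := by
  obtain ⟨ξ, hξ, h⟩ := exists_iteratedDeriv_eq_factorial_mul_dividedDiff hIo hI hf hs hv hvI
  exact pos_of_mul_pos_right (h ▸ hf' ξ hξ) (Nat.cast_nonneg _)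

end DividedDiff

section ChebyshevFibre

open Polynomial Polynomial.Chebyshev

variable {ι : Type*} {s : Finset ι} {a : ι → ℝ} {x : ℝ}

theorem C_mul_nodal_cos_eq_T_sub_C (hs : s.Nonempty) (ha : Set.InjOn (fun i ↦ cos (a i)) s)
    (hcos : ∀ i ∈ s, cos (#s * a i) = cos x) :
    C (2 ^ (#s - 1)) * Lagrange.nodal s (fun i ↦ cos (a i)) = T ℝ #s - C (cos x) := by
  have hlt : (C (cos x)).degree < (T ℝ #s).degree := by
    rw [degree_T, Int.natAbs_natCast]
    exact degree_C_le.trans_lt (by exact_mod_cast hs.card_pos)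
  have hdeg : (C (2 ^ (#s - 1)) * Lagrange.nodal s (fun i ↦ cos (a i))).degree =
      (#s : WithBot ℕ) := by
    rw [degree_C_mul (by positivity), Lagrange.degree_nodal]
  refine eq_of_degree_le_of_eval_index_eq s ha hdeg.le ?_ ?_ fun i hi ↦ ?_
  · rw [hdeg, degree_sub_eq_left_of_degree_lt hlt, degree_T, Int.natAbs_natCast]
  · rw [leadingCoeff_sub_of_degree_lt hlt, leadingCoeff_T, leadingCoeff_mul, leadingCoeff_C,
      Lagrange.nodal_monic.leadingCoeff, mul_one, Int.natAbs_natCast]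
  · have hnodal := Lagrange.eval_nodal_at_node (v := fun i ↦ cos (a i)) hi
    simp [hnodal, hcos i hi]

variable [DecidableEq ι]

theorem two_pow_mul_prod_cos_sub_cos_mul_sin (ha : Set.InjOn (fun i ↦ cos (a i)) s)
    (hcos : ∀ i ∈ s, cos (#s * a i) = cos x) {i : ι} (hi : i ∈ s) :
    2 ^ (#s - 1) * (∏ j ∈ s.erase i, (cos (a i) - cos (a j))) * sin (a i) =
      #s * sin (#s * a i) := by
  have h := congrArg (fun P ↦ (derivative P).eval (cos (a i)) * sin (a i))
    (C_mul_nodal_cos_eq_T_sub_C ⟨i, hi⟩ ha hcos)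
  have hnodal := Lagrange.eval_nodal_derivative_eval_node_eq (v := fun i ↦ cos (a i)) hi
  have hU := U_real_cos (a i) (#s - 1)
  simp only [derivative_C_mul, eval_mul, eval_C, hnodal, Lagrange.eval_nodal, derivative_sub,
    derivative_C, sub_zero, T_derivative_eq_U] at h
  simpa [mul_assoc, hU] using h

theorem sum_comp_cos_mul_sin_eq_mul_dividedDiff (ha : Set.InjOn (fun i ↦ cos (a i)) s)
    (hcos : ∀ i ∈ s, cos (#s * a i) = cos x) (hsin : ∀ i ∈ s, sin (#s * a i) = sin x)
    (g : ℝ → ℝ) :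
    ∑ i ∈ s, g (cos (a i)) * sin (a i) =
      #s * sin x / 2 ^ (#s - 1) * dividedDiff s (fun i ↦ cos (a i)) g := by
  rw [dividedDiff, mul_sum]
  refine sum_congr rfl fun i hi ↦ ?_
  have hne : ∏ j ∈ s.erase i, (cos (a i) - cos (a j)) ≠ 0 := prod_ne_zero_iff.2 fun j hj ↦
    sub_ne_zero.2 fun h ↦ ne_of_mem_erase hj (ha (mem_of_mem_erase hj) hi h.symm)
  rw [← hsin i hi, ← two_pow_mul_prod_cos_sub_cos_mul_sin ha hcos hi]
  field_simp

theorem sin_ne_zero_of_sin_natCast_mul_ne_zero {n : ℕ} {y : ℝ} (h : sin (n * y) ≠ 0) :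
    sin y ≠ 0 := by
  intro hy
  have hU := U_real_cos y (n - 1)
  rw [hy, mul_zero] at hU
  exact h (by simpa using hU.symm)

end ChebyshevFibre

section DihedralAngle

/-- Twice the angle occurring in the `j`-th term of `dihedralU`, so that
`sin ((j : ℝ) * π / l - θ) ^ 2 = (1 - cos (dihedralAngle l θ j)) / 2`. -/
noncomputable def dihedralAngle (l : ℕ) (θ : ℝ) (j : ℕ) : ℝ :=
  2 * (j * π / l - θ)

variable {l : ℕ} {θ : ℝ}

theorem natCast_mul_dihedralAngle (hl : l ≠ 0) (j : ℕ) :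
    l * dihedralAngle l θ j = -(2 * l * θ) + j * (2 * π) := by
  rw [dihedralAngle]
  field_simp
  ring

theorem injOn_cos_dihedralAngle (hθ : sin (2 * l * θ) ≠ 0) :
    Set.InjOn (fun j ↦ cos (dihedralAngle l θ j)) (Icc 1 l : Finset ℕ) := by
  have hl : l ≠ 0 := by rintro rfl; simp at hθ
  intro i hi j hj hij
  rw [coe_Icc] at hi hj
  obtain ⟨k, hk | hk⟩ := cos_eq_cos_iff.1 hij
  · have hji : (j - i : ℤ) = k * l := by
      rw [dihedralAngle, dihedralAngle] at hk
      field_simp at hk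
      exact_mod_cast mul_left_cancel₀ pi_ne_zero (by linarith : π * (j - i : ℝ) = π * (k * l))
    have hk0 := Int.eq_zero_of_abs_lt_dvd ⟨k, hji.trans (mul_comm _ _)⟩ (by grind)
    lia
  · refine absurd (sin_eq_zero_iff.2 ⟨i + j - k * l, ?_⟩) hθ
    rw [dihedralAngle, dihedralAngle] at hk
    field_simp at hk
    push_cast
    linarith

theorem cos_dihedralAngle_mem_Ioo (hθ : sin (2 * l * θ) ≠ 0) (j : ℕ) :
    cos (dihedralAngle l θ j) ∈ Set.Ioo (-1) 1 := by
  have hl : l ≠ 0 := by rintro rfl; simp at hθ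
  have hsin : sin (dihedralAngle l θ j) ≠ 0 := by
    refine sin_ne_zero_of_sin_natCast_mul_ne_zero (n := l) ?_
    rwa [natCast_mul_dihedralAngle hl, sin_add_nat_mul_two_pi, sin_neg, neg_ne_zero]
  rw [Set.mem_Ioo, ← abs_lt, ← sq_lt_one_iff_abs_lt_one, cos_sq']
  exact sub_lt_self _ (by positivity)

end DihedralAngle

section OrbitSum

variable {F : ℝ → ℝ} {l : ℕ} {θ : ℝ}

theorem hasDerivAt_sum_comp_cos_dihedralAngle (hF : ContDiffOn ℝ l F (Set.Ioo (-1) 1))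
    (hθ : sin (2 * l * θ) ≠ 0) :
    HasDerivAt (fun θ ↦ ∑ j ∈ Icc 1 l, F (cos (dihedralAngle l θ j)))
      (-(sin (2 * l * θ) * (2 * (l / 2 ^ (l - 1)) *
        dividedDiff (Icc 1 l) (fun j ↦ cos (dihedralAngle l θ j)) (deriv F)))) θ := by
  have hl : l ≠ 0 := by rintro rfl; simp at hθ
  have hterm (j : ℕ) : HasDerivAt (fun θ ↦ F (cos (dihedralAngle l θ j)))
      (2 * (deriv F (cos (dihedralAngle l θ j)) * sin (dihedralAngle l θ j))) θ := by
    have hFj : HasDerivAt F _ (cos (dihedralAngle l θ j)) :=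
      ((hF.contDiffAt (isOpen_Ioo.mem_nhds (cos_dihedralAngle_mem_Ioo hθ j))).differentiableAt
        (by exact_mod_cast hl)).hasDerivAt
    have hangle : HasDerivAt (fun θ ↦ dihedralAngle l θ j) (2 * (-1)) θ :=
      ((hasDerivAt_id θ).const_sub _).const_mul 2
    exact (hFj.comp θ hangle.cos).congr_deriv (by ring)
  have hsum := sum_comp_cos_mul_sin_eq_mul_dividedDiff (x := -(2 * l * θ))
    (injOn_cos_dihedralAngle hθ)
    (fun j _ ↦ by rw [Nat.card_Icc, Nat.add_sub_cancel, natCast_mul_dihedralAngle hl,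
      cos_add_nat_mul_two_pi])
    (fun j _ ↦ by rw [Nat.card_Icc, Nat.add_sub_cancel, natCast_mul_dihedralAngle hl,
      sin_add_nat_mul_two_pi]) (deriv F)
  rw [Nat.card_Icc, Nat.add_sub_cancel, sin_neg] at hsum
  refine (HasDerivAt.fun_sum fun j _ ↦ hterm j).congr_deriv ?_
  rw [← mul_sum, hsum]
  ring

theorem dividedDiff_deriv_cos_dihedralAngle_pos (hF : ContDiffOn ℝ l F (Set.Ioo (-1) 1))
    (hF' : ∀ u ∈ Set.Ioo (-1) 1, 0 < iteratedDeriv l F u) (hθ : sin (2 * l * θ) ≠ 0) :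
    0 < dividedDiff (Icc 1 l) (fun j ↦ cos (dihedralAngle l θ j)) (deriv F) := by
  have hl : l ≠ 0 := by rintro rfl; simp at hθ
  obtain ⟨n, rfl⟩ := Nat.exists_eq_succ_of_ne_zero hl
  refine dividedDiff_pos (n := n) isOpen_Ioo Set.ordConnected_Ioo
    (hF.deriv_of_isOpen isOpen_Ioo (by norm_cast)) ?_ (by simp) (injOn_cos_dihedralAngle hθ)
    fun j _ ↦ cos_dihedralAngle_mem_Ioo hθ j
  simpa only [iteratedDeriv_succ'] using hF'

theorem strictAntiOn_sum_comp_cos_dihedralAngle (hF : ContDiffOn ℝ l F (Set.Ioo (-1) 1))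
    (hF' : ∀ u ∈ Set.Ioo (-1) 1, 0 < iteratedDeriv l F u) (hl : 0 < l) :
    StrictAntiOn (fun θ ↦ ∑ j ∈ Icc 1 l, F (cos (dihedralAngle l θ j)))
      (Set.Ioo 0 (π / (2 * l))) := by
  have hsin : ∀ θ ∈ Set.Ioo 0 (π / (2 * l)), 0 < sin (2 * l * θ) := fun θ hθ ↦ by
    have hlt := (lt_div_iff₀' (by positivity)).1 hθ.2
    exact sin_pos_of_pos_of_lt_pi (mul_pos (by positivity) hθ.1) hlt
  have hderiv := fun θ hθ ↦ hasDerivAt_sum_comp_cos_dihedralAngle hF (hsin θ hθ).ne'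
  refine strictAntiOn_of_deriv_neg (convex_Ioo _ _) (HasDerivAt.continuousOn hderiv) ?_
  rw [interior_Ioo]
  intro θ hθ
  rw [(hderiv θ hθ).deriv]
  have hsinθ := hsin θ hθ
  have hdiff := dividedDiff_deriv_cos_dihedralAngle_pos hF hF' hsinθ.ne'
  exact neg_lt_zero.2 (by positivity)

theorem strictMonoOn_sum_comp_cos_dihedralAngle (hF : ContDiffOn ℝ l F (Set.Ioo (-1) 1))
    (hF' : ∀ u ∈ Set.Ioo (-1) 1, 0 < iteratedDeriv l F u) (hl : 0 < l) :
    StrictMonoOn (fun θ ↦ ∑ j ∈ Icc 1 l, F (cos (dihedralAngle l θ j)))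
      (Set.Ioo (π / (2 * l)) (π / l)) := by
  have hsin : ∀ θ ∈ Set.Ioo (π / (2 * l)) (π / l), sin (2 * l * θ) < 0 := fun θ hθ ↦ by
    have hgt := (div_lt_iff₀' (by positivity)).1 hθ.1
    have hlt := (lt_div_iff₀' (by positivity)).1 hθ.2
    rw [← sin_sub_two_pi]
    exact sin_neg_of_neg_of_neg_pi_lt (by linarith) (by linarith)
  have hderiv := fun θ hθ ↦ hasDerivAt_sum_comp_cos_dihedralAngle hF (hsin θ hθ).ne
  refine strictMonoOn_of_deriv_pos (convex_Ioo _ _) (HasDerivAt.continuousOn hderiv) ?_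
  rw [interior_Ioo]
  intro θ hθ
  rw [(hderiv θ hθ).deriv]
  have hdiff := dividedDiff_deriv_cos_dihedralAngle_pos hF hF' (hsin θ hθ).ne
  exact neg_pos.2 (mul_neg_of_neg_of_pos (hsin θ hθ) (by positivity))

end OrbitSum

section PowerLaw

variable {c u β : ℝ}

theorem contDiffOn_sub_rpow_neg (n : ℕ) : ContDiffOn ℝ n (fun u ↦ (c - u) ^ (-β)) (Set.Iio c) :=
  (contDiffOn_const.sub contDiffOn_id).rpow_const_of_ne fun _ hu ↦ (sub_pos.2 hu).ne'

theorem iteratedDeriv_sub_rpow_neg (n : ℕ) :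
    iteratedDeriv n (fun u ↦ (c - u) ^ (-β)) u =
      (ascPochhammer ℝ n).eval β * (c - u) ^ (-β - n) := by
  rw [iteratedDeriv_comp_const_sub n (fun x ↦ x ^ (-β)) c]
  beta_reduce
  rw [iteratedDeriv_eq_iterate, iter_deriv_rpow_const, smul_eq_mul, ← mul_assoc,
    ← ascPochhammer_eval_neg_eq_descPochhammer, neg_neg]

theorem iteratedDeriv_sub_rpow_neg_pos (hβ : 0 < β) (hu : u < c) (n : ℕ) :
    0 < iteratedDeriv n (fun u ↦ (c - u) ^ (-β)) u := by
  rw [iteratedDeriv_sub_rpow_neg]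
  exact mul_pos (ascPochhammer_pos n β hβ) (rpow_pos_of_pos (sub_pos.2 hu) _)

end PowerLaw

theorem sin_sq_add_rpow_neg_eq (l : ℕ) (θ β : ℝ) {t : ℝ} (ht : 0 ≤ t) (j : ℕ) :
    (sin (j * π / l - θ) ^ 2 + t) ^ (-β) =
      2 ^ β * (1 + 2 * t - cos (dihedralAngle l θ j)) ^ (-β) := by
  have hcos := cos_le_one (dihedralAngle l θ j)
  have h : sin (j * π / l - θ) ^ 2 + t = 2⁻¹ * (1 + 2 * t - cos (dihedralAngle l θ j)) := by
    rw [sin_sq_eq_half_sub, dihedralAngle]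
    ring
  rw [h, mul_rpow (by norm_num) (by linarith), inv_rpow (by norm_num), rpow_neg (by norm_num),
    inv_inv]

theorem dihedralU_eq_add_mul_sum_comp_cos (l : ℕ) (α θ φ : ℝ) :
    dihedralU l α θ φ = (2 * cos φ) ^ (-α) *
      ((∑ j ∈ Icc 1 (l - 1), sin (j * π / l) ^ (-α)) + 2 ^ (α / 2) *
        ∑ j ∈ Icc 1 l, (1 + 2 * tan φ ^ 2 - cos (dihedralAngle l θ j)) ^ (-(α / 2))) := by
  simp only [dihedralU, neg_div, sin_sq_add_rpow_neg_eq l θ _ (sq_nonneg (tan φ)), mul_sum]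

theorem dihedralU_monotonicity_in_theta_general (l : ℕ) (hl : 0 < l) (α : ℝ) (hα : 0 < α)
    (φ : ℝ) (hφ : φ ∈ Set.Ioo (-(π / 2)) (π / 2)) :
    StrictAntiOn (fun θ ↦ dihedralU l α θ φ) (Set.Ioo 0 (π / (2 * l))) ∧
    StrictMonoOn (fun θ ↦ dihedralU l α θ φ) (Set.Ioo (π / (2 * l)) (π / l)) := by
  have hsub : Set.Ioo (-1) 1 ⊆ Set.Iio (1 + 2 * tan φ ^ 2) := fun u hu ↦
    hu.2.trans_le (le_add_of_nonneg_right (by positivity))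
  have hF := (contDiffOn_sub_rpow_neg (c := 1 + 2 * tan φ ^ 2) (β := α / 2) l).mono hsub
  have hF' := fun u (hu : u ∈ Set.Ioo (-1 : ℝ) 1) ↦
    iteratedDeriv_sub_rpow_neg_pos (half_pos hα) (hsub hu) l
  have hcos : 0 < cos φ := cos_pos_of_mem_Ioo hφ
  simp only [dihedralU_eq_add_mul_sum_comp_cos]
  constructor
  · intro x hx y hy hxy
    have hlt := strictAntiOn_sum_comp_cos_dihedralAngle hF hF' hl hx hy hxy
    dsimp only at hlt ⊢
    gcongr
  · intro x hx y hy hxy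
    have hlt := strictMonoOn_sum_comp_cos_dihedralAngle hF hF' hl hx hy hxy
    dsimp only at hlt ⊢
    gcongr

theorem dihedralU_monotonicity_in_theta (l : ℕ) (hl : 2 ≤ l)
    (α : ℝ) (hα : α ∈ Set.Ioo (0 : ℝ) 2)
    (φ : ℝ) (hφ : φ ∈ Set.Ioo (-(Real.pi / 2)) (Real.pi / 2)) :
    StrictAntiOn (fun θ => dihedralU l α θ φ) (Set.Ioo 0 (Real.pi / (2 * l))) ∧
    StrictMonoOn (fun θ => dihedralU l α θ φ) (Set.Ioo (Real.pi / (2 * l)) (Real.pi / l)) :=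
  dihedralU_monotonicity_in_theta_general l (by lia) α hα.1 φ hφ
end

section
/- A point θ ∈ ℝ with θ ∉ (π/l)ℤ is a critical point of the function θ ↦ U(θ, 0) if and only if θ = (2k+1)π/(2l) for some integer k. Moreover at each such point both partial derivatives of U vanish: ∂U/∂θ((2k+1)π/(2l), 0) = 0 and ∂U/∂φ((2k+1)π/(2l), 0) = 0; these are the planar regular 2l-gon central configurations. -/
open Real Finset

/-!
With `φ = 0` fixed, `U` is, up to constants, the sum over `1 ≤ j ≤ l` of
`|sin (j * π / l - θ)| ^ (-α)`. This sum is `π / l`-periodic and symmetric about `π / (2 * l)`. On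
the cell `(0, π / l)` every argument stays inside `(0, π)`, where `sin ^ (-α)` is strictly convex,
being a negative power of the positive strictly concave function `sin`. Hence the derivative is
injective on the cell and vanishes exactly at the centre. In the `φ` direction, `U` is even.
-/

section Reflection

variable {F : Type*} [NormedAddCommGroup F] [NormedSpace ℝ F]

lemma deriv_eq_zero_of_reflection {f : ℝ → F} {c : ℝ} (hf : ∀ x, f (2 * c - x) = f x) :
    deriv f c = 0 := by
  have : IsAddTorsionFree F := .of_isTorsionFree ℝ F
  have h : deriv (fun x => f (2 * c - x)) c = -deriv f (2 * c - c) := deriv_comp_const_sub ..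
  rw [funext hf, two_mul, add_sub_cancel_right] at h
  exact self_eq_neg.mp h

lemma periodic_deriv {f : ℝ → F} {c : ℝ} (hf : Function.Periodic f c) :
    Function.Periodic (deriv f) c := fun x => by
  rw [← deriv_comp_add_const, hf.funext]

end Reflection

section PeriodicCriticalPoints

variable {f : ℝ → ℝ} {c : ℝ}

lemma deriv_centre_eq_zero_of_periodic (hper : Function.Periodic f c)
    (hrefl : ∀ x, f (c - x) = f x) (k : ℤ) : deriv f ((k + 1 / 2) * c) = 0 :=
  deriv_eq_zero_of_reflection fun x => calc
    f (2 * ((k + 1 / 2) * c) - x) = f (c - x + (2 * k : ℤ) * c) := by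
      congr 1
      push_cast
      ring
    _ = f (c - x) := hper.int_mul _ _
    _ = f x := hrefl x

lemma exists_int_sub_mul_mem_Ioo (hc : 0 < c) {x : ℝ} (hx : ∀ k : ℤ, x ≠ k * c) :
    ∃ k : ℤ, x - k * c ∈ Set.Ioo 0 c := by
  obtain ⟨k, ⟨hk₀, hkc⟩, -⟩ := existsUnique_sub_zsmul_mem_Ico hc x 0
  rw [zsmul_eq_mul] at hk₀ hkc
  exact ⟨k, hk₀.lt_of_ne' (sub_ne_zero.mpr (hx k)), by simpa only [zero_add] using hkc⟩

theorem deriv_eq_zero_iff_of_periodic_of_strictConvexOn (hc : 0 < c)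
    (hper : Function.Periodic f c) (hrefl : ∀ x, f (c - x) = f x)
    (hconv : StrictConvexOn ℝ (Set.Ioo 0 c) f) (hdiff : ∀ x ∈ Set.Ioo 0 c, DifferentiableAt ℝ f x)
    {x : ℝ} (hx : ∀ k : ℤ, x ≠ k * c) :
    deriv f x = 0 ↔ ∃ k : ℤ, x = (k + 1 / 2) * c := by
  refine ⟨fun h => ?_, ?_⟩
  · obtain ⟨k, hk⟩ := exists_int_sub_mul_mem_Ioo hc hx
    have hshift : deriv f (x - k * c) = 0 := ((periodic_deriv hper).sub_int_mul_eq k).trans h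
    have hcentre : deriv f (c / 2) = 0 := by
      simpa [div_eq_inv_mul] using deriv_centre_eq_zero_of_periodic hper hrefl 0
    have heq : x - k * c = c / 2 :=
      (hconv.strictMonoOn_deriv hdiff).injOn hk ⟨by positivity, half_lt_self hc⟩
        (hshift.trans hcentre.symm)
    exact ⟨k, by linear_combination heq⟩
  · rintro ⟨k, rfl⟩
    exact deriv_centre_eq_zero_of_periodic hper hrefl k

end PeriodicCriticalPoints

section StrictConvexity

lemma convexOn_rpow_of_nonpos {p : ℝ} (hp : p ≤ 0) :
    ConvexOn ℝ (Set.Ioi 0) fun x : ℝ => x ^ p := by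
  refine ⟨convex_Ioi 0, fun x hx y hy a b ha hb hab => ?_⟩
  have hlog := strictConcaveOn_log_Ioi.concaveOn.2 hx hy ha hb hab
  have hexp := convexOn_exp.2 (Set.mem_univ (log x * p)) (Set.mem_univ (log y * p)) ha hb hab
  have hxy : 0 < a • x + b • y := convex_Ioi (0 : ℝ) hx hy ha hb hab
  simp only [rpow_def_of_pos hx, rpow_def_of_pos hy, rpow_def_of_pos hxy]
  refine le_trans (exp_le_exp.mpr ?_) hexp
  calc log (a • x + b • y) * p ≤ (a • log x + b • log y) * p :=
        mul_le_mul_of_nonpos_right hlog hp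
    _ = a • (log x * p) + b • (log y * p) := by simp only [smul_eq_mul]; ring

lemma strictConvexOn_rpow_of_strictConcaveOn {E : Type*} [AddCommGroup E] [Module ℝ E] {s : Set E}
    {f : E → ℝ} {p : ℝ} (hp : p < 0) (hf : StrictConcaveOn ℝ s f) (hpos : ∀ x ∈ s, 0 < f x) :
    StrictConvexOn ℝ s fun x => f x ^ p := by
  refine ⟨hf.1, fun x hx y hy hxy a b ha hb hab => ?_⟩
  have hcomb : 0 < a • f x + b • f y :=
    convex_Ioi (0 : ℝ) (hpos x hx) (hpos y hy) ha.le hb.le hab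
  calc f (a • x + b • y) ^ p < (a • f x + b • f y) ^ p :=
        rpow_lt_rpow_of_neg hcomb (hf.2 hx hy hxy ha hb hab) hp
    _ ≤ a • f x ^ p + b • f y ^ p :=
        (convexOn_rpow_of_nonpos hp.le).2 (hpos x hx) (hpos y hy) ha.le hb.le hab

lemma strictConvexOn_comp_const_sub {E : Type*} [AddCommGroup E] [Module ℝ E] {s t : Set E}
    {f : E → ℝ} {a : E} (hf : StrictConvexOn ℝ s f) (ht : Convex ℝ t)
    (hmaps : Set.MapsTo (fun x => a - x) t s) : StrictConvexOn ℝ t fun x => f (a - x) := by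
  refine ⟨ht, fun x hx y hy hxy u v hu hv huv => ?_⟩
  have hcomb : a - (u • x + v • y) = u • (a - x) + v • (a - y) := by
    rw [smul_sub, smul_sub, sub_add_sub_comm, Convex.combo_self huv]
  simp only [hcomb]
  exact hf.2 (hmaps hx) (hmaps hy) (sub_right_injective.ne hxy) hu hv huv

lemma strictConvexOn_finsetSum {E ι : Type*} [AddCommGroup E] [Module ℝ E] {s : Set E}
    {t : Finset ι} (ht : t.Nonempty) {f : ι → E → ℝ} (hf : ∀ i ∈ t, StrictConvexOn ℝ s (f i)) :
    StrictConvexOn ℝ s fun x => ∑ i ∈ t, f i x := by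
  rw [← Finset.sum_fn]
  exact Finset.sum_induction_nonempty f (StrictConvexOn ℝ s) (fun _ _ => .add) ht hf

end StrictConvexity

section CyclicSum

/-- For `f` of period `c`, the potential at `t` created by `l` equally spaced sources on the circle
`ℝ / cℤ`, each interacting through `f`. The index range and the form of the argument are those of
`dihedralU`. -/
noncomputable def cyclicSum (f : ℝ → ℝ) (c : ℝ) (l : ℕ) (t : ℝ) : ℝ :=
  ∑ j ∈ Finset.Icc 1 l, f ((j : ℝ) * c / l - t)

variable {f : ℝ → ℝ} {c : ℝ} {l : ℕ}

lemma cyclicSum_eq_sum_range (f : ℝ → ℝ) (c : ℝ) (l : ℕ) (t : ℝ) :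
    cyclicSum f c l t = ∑ j ∈ Finset.range l, f (((j + 1 : ℕ) : ℝ) * c / l - t) := by
  rw [cyclicSum, Finset.range_eq_Ico,
    Finset.sum_Ico_add' (fun j : ℕ => f ((j : ℝ) * c / l - t)) 0 l 1]
  rfl

lemma periodic_cyclicSum (hl : l ≠ 0) (hf : Function.Periodic f c) :
    Function.Periodic (cyclicSum f c l) (c / l) := by
  intro t
  have hwrap : f ((l : ℝ) * c / l - t) = f (((0 : ℕ) : ℝ) * c / l - t) := by
    rw [← hf (((0 : ℕ) : ℝ) * c / l - t)]
    congr 1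
    field_simp
    push_cast
    ring
  calc cyclicSum f c l (t + c / l) = ∑ j ∈ Finset.range l, f ((j : ℝ) * c / l - t) := by
        rw [cyclicSum_eq_sum_range]
        refine Finset.sum_congr rfl fun j _ => congrArg f ?_
        push_cast
        ring
    _ = ∑ j ∈ Finset.range l, f (((j + 1 : ℕ) : ℝ) * c / l - t) := by
        have htop := Finset.sum_range_succ (fun j : ℕ => f ((j : ℝ) * c / l - t)) l
        have hbot := Finset.sum_range_succ' (fun j : ℕ => f ((j : ℝ) * c / l - t)) l
        linarith
    _ = cyclicSum f c l t := (cyclicSum_eq_sum_range f c l t).symm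

lemma cyclicSum_reflection (hl : l ≠ 0) (hf : ∀ x, f (c - x) = f x) (t : ℝ) :
    cyclicSum f c l (c / l - t) = cyclicSum f c l t := by
  refine Finset.sum_nbij' (l + 1 - ·) (l + 1 - ·) (by grind) (by grind) (by grind) (by grind)
    fun j hj => ?_
  have hcast : ((l + 1 - j : ℕ) : ℝ) = l + 1 - j := by
    rw [Nat.cast_sub (by grind)]
    push_cast
    rfl
  rw [← hf, hcast]
  congr 1
  field_simp
  ring

lemma sub_mem_Ioo_of_mem_Ioo_div (hc : 0 ≤ c) {j : ℕ} (hj : j ∈ Finset.Icc 1 l) {t : ℝ}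
    (ht : t ∈ Set.Ioo 0 (c / l)) : (j : ℝ) * c / l - t ∈ Set.Ioo 0 c := by
  obtain ⟨hj₁, hjl⟩ := Finset.mem_Icc.mp hj
  have hl : (0 : ℝ) < l := by exact_mod_cast hj₁.trans hjl
  have hlower : c / l ≤ (j : ℝ) * c / l := by
    gcongr
    exact le_mul_of_one_le_left hc (by exact_mod_cast hj₁)
  have hupper : (j : ℝ) * c / l ≤ c := by
    rw [div_le_iff₀ hl, mul_comm]
    gcongr
  exact ⟨by linarith [ht.2], by linarith [ht.1]⟩

lemma strictConvexOn_cyclicSum (hl : l ≠ 0) (hc : 0 ≤ c)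
    (hf : StrictConvexOn ℝ (Set.Ioo 0 c) f) :
    StrictConvexOn ℝ (Set.Ioo 0 (c / l)) (cyclicSum f c l) :=
  strictConvexOn_finsetSum (Finset.nonempty_Icc.mpr (Nat.one_le_iff_ne_zero.mpr hl)) fun _ hj =>
    strictConvexOn_comp_const_sub hf (convex_Ioo _ _) fun _ => sub_mem_Ioo_of_mem_Ioo_div hc hj

lemma differentiableAt_cyclicSum (hc : 0 ≤ c)
    (hf : ∀ x ∈ Set.Ioo 0 c, DifferentiableAt ℝ f x) {t : ℝ} (ht : t ∈ Set.Ioo 0 (c / l)) :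
    DifferentiableAt ℝ (cyclicSum f c l) t :=
  DifferentiableAt.fun_sum fun _ hj =>
    (hf _ (sub_mem_Ioo_of_mem_Ioo_div hc hj ht)).comp t (differentiableAt_id.const_sub _)

end CyclicSum

section ChordPotential

/-- The potential `|sin x| ^ (-α)` between two points of the circle of diameter `1` subtending the
central angle `2 * x`, whose distance is the chord length `|sin x|`. It is written as a power of
`sin x ^ 2`, as in `dihedralU`. -/
noncomputable def chordPotential (α x : ℝ) : ℝ :=
  (sin x ^ 2) ^ (-α / 2)

variable {α : ℝ}

lemma periodic_chordPotential (α : ℝ) : Function.Periodic (chordPotential α) π := fun x => by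
  simp [chordPotential, sin_add_pi]

lemma chordPotential_pi_sub (α x : ℝ) : chordPotential α (π - x) = chordPotential α x := by
  rw [chordPotential, sin_pi_sub, chordPotential]

lemma chordPotential_eq_sin_rpow {x : ℝ} (hx : 0 ≤ sin x) : chordPotential α x = sin x ^ (-α) := by
  rw [chordPotential, ← rpow_natCast_mul hx]
  congr 1
  push_cast
  ring

lemma strictConvexOn_chordPotential (hα : 0 < α) :
    StrictConvexOn ℝ (Set.Ioo 0 π) (chordPotential α) := by
  have hsin : StrictConcaveOn ℝ (Set.Ioo 0 π) sin :=
    strictConcaveOn_sin_Icc.subset Set.Ioo_subset_Icc_self (convex_Ioo _ _)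
  exact (strictConvexOn_rpow_of_strictConcaveOn (neg_lt_zero.mpr hα) hsin
    fun _ => sin_pos_of_mem_Ioo).congr
    fun x hx => (chordPotential_eq_sin_rpow (sin_pos_of_mem_Ioo hx).le).symm

lemma differentiableAt_chordPotential {x : ℝ} (hx : sin x ≠ 0) :
    DifferentiableAt ℝ (chordPotential α) x :=
  (differentiableAt_sin.pow 2).rpow_const (Or.inl (pow_ne_zero 2 hx))

end ChordPotential

section DihedralPotential

lemma dihedralU_zero_right (l : ℕ) (α t : ℝ) :
    dihedralU l α t 0 = 2 ^ (-α) *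
      (∑ j ∈ Finset.Icc 1 (l - 1), sin ((j : ℝ) * π / l) ^ (-α) +
        cyclicSum (chordPotential α) π l t) := by
  simp [dihedralU, cyclicSum, chordPotential]

lemma deriv_dihedralU_zero_right (l : ℕ) (α t : ℝ) :
    deriv (fun t => dihedralU l α t 0) t =
      2 ^ (-α) * deriv (cyclicSum (chordPotential α) π l) t := by
  simp only [dihedralU_zero_right]
  rw [deriv_const_mul_field, deriv_const_add]

lemma dihedralU_neg_right (l : ℕ) (α θ φ : ℝ) : dihedralU l α θ (-φ) = dihedralU l α θ φ := by
  simp [dihedralU]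

lemma deriv_dihedralU_right_zero (l : ℕ) (α θ : ℝ) : deriv (fun φ => dihedralU l α θ φ) 0 = 0 :=
  deriv_eq_zero_of_reflection fun φ => by
    rw [mul_zero, zero_sub, dihedralU_neg_right]

lemma deriv_dihedralU_zero_right_eq_zero_iff {l : ℕ} (hl : l ≠ 0) {α : ℝ} (hα : 0 < α) {θ : ℝ}
    (hθ : ∀ k : ℤ, θ ≠ k * (π / l)) :
    deriv (fun t => dihedralU l α t 0) θ = 0 ↔ ∃ k : ℤ, θ = (k + 1 / 2) * (π / l) := by
  rw [deriv_dihedralU_zero_right, mul_eq_zero_iff_left (by positivity)]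
  exact deriv_eq_zero_iff_of_periodic_of_strictConvexOn (by positivity)
    (periodic_cyclicSum hl (periodic_chordPotential α))
    (cyclicSum_reflection hl (chordPotential_pi_sub α))
    (strictConvexOn_cyclicSum hl pi_nonneg (strictConvexOn_chordPotential hα))
    (fun _ => differentiableAt_cyclicSum pi_nonneg
      fun _ hx => differentiableAt_chordPotential (sin_pos_of_mem_Ioo hx).ne') hθ

lemma deriv_dihedralU_zero_right_centre {l : ℕ} (hl : l ≠ 0) (α : ℝ) (k : ℤ) :
    deriv (fun t => dihedralU l α t 0) ((k + 1 / 2) * (π / l)) = 0 := by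
  rw [deriv_dihedralU_zero_right, deriv_centre_eq_zero_of_periodic
    (periodic_cyclicSum hl (periodic_chordPotential α))
    (cyclicSum_reflection hl (chordPotential_pi_sub α)), mul_zero]

end DihedralPotential

theorem planar_2lgon_central_configurations_general {l : ℕ} (hl : l ≠ 0) {α : ℝ} (hα : 0 < α)
    {θ : ℝ} (hθ : ∀ k : ℤ, θ ≠ (k : ℝ) * (Real.pi / l)) :
    (deriv (fun t => dihedralU l α t 0) θ = 0 ↔
      ∃ k : ℤ, θ = (2 * (k : ℝ) + 1) * Real.pi / (2 * l)) ∧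
    ∀ k : ℤ,
      deriv (fun t => dihedralU l α t 0) ((2 * (k : ℝ) + 1) * Real.pi / (2 * l)) = 0 ∧
      deriv (fun p => dihedralU l α ((2 * (k : ℝ) + 1) * Real.pi / (2 * l)) p) 0 = 0 := by
  have hcentre (k : ℤ) : (2 * (k : ℝ) + 1) * π / (2 * l) = (k + 1 / 2) * (π / l) := by
    field_simp
  simp only [hcentre]
  exact ⟨deriv_dihedralU_zero_right_eq_zero_iff hl hα hθ,
    fun k => ⟨deriv_dihedralU_zero_right_centre hl α k, deriv_dihedralU_right_zero l α _⟩⟩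

theorem planar_2lgon_central_configurations (l : ℕ) (hl : 2 ≤ l)
    (α : ℝ) (hα : α ∈ Set.Ioo (0 : ℝ) 2)
    (θ : ℝ) (hθ : ∀ k : ℤ, θ ≠ (k : ℝ) * (Real.pi / l)) :
    (deriv (fun t => dihedralU l α t 0) θ = 0 ↔
      ∃ k : ℤ, θ = (2 * (k : ℝ) + 1) * Real.pi / (2 * l)) ∧
    ∀ k : ℤ,
      deriv (fun t => dihedralU l α t 0) ((2 * (k : ℝ) + 1) * Real.pi / (2 * l)) = 0 ∧
      deriv (fun p => dihedralU l α ((2 * (k : ℝ) + 1) * Real.pi / (2 * l)) p) 0 = 0 :=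
  planar_2lgon_central_configurations_general (by omega) hα.1 hθ
end

section
/- There exists a unique φ̂ ∈ (0, π/2) such that f_0(φ̂) = 0, where f_0(φ) = Σ_{j=1}^{l-1} (sin(jπ/l))^{-α} − Σ_{j=1}^{l} cos²(jπ/l) / (sin²(jπ/l) + tan²φ)^{β+1}. Moreover the point (θ, φ) = (0, φ̂) is a critical point of U, i.e. ∂U/∂θ(0, φ̂) = 0 and ∂U/∂φ(0, φ̂) = 0; this is the prism central configuration. -/
open Real Finset

/-! The `φ`-derivative of the potential at `θ = 0` is `(2 cos φ)^(-α) α tan φ · f₀ φ`, and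
`f₀ φ = A - F (tan² φ)`, where `A` is the interaction inside one `l`-gon and
`F T = ∑ cos² aⱼ / (sin² aⱼ + T) ^ (β + 1)` with `aⱼ = jπ/l`. Each nonzero summand of `F` decreases
to `0` as `T → ∞`, and the one with `sin aⱼ = 0` blows up as `T → 0⁺`, so `F` is a decreasing
bijection of `(0, ∞)` and takes the value `A > 0` exactly once. The `θ`-derivative vanishes at `0`
because the reflection of the `l`-gon makes the potential even in `θ`. -/

open Set Filter Topology

section InversePowerSums

variable {ι : Type*} {s : Finset ι} {w c : ι → ℝ} {p : ℝ}

/-- The inverse power sum `T ↦ ∑ wᵢ / (cᵢ + T) ^ p`. The prism equation is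
`inversePowerSum s w c p (tan² φ) = A` with `wⱼ = cos² (jπ/l)` and `cⱼ = sin² (jπ/l)`. -/
noncomputable def inversePowerSum (s : Finset ι) (w c : ι → ℝ) (p T : ℝ) : ℝ :=
  ∑ i ∈ s, w i / (c i + T) ^ p

lemma continuousOn_inversePowerSum (hc : ∀ i ∈ s, 0 ≤ c i) :
    ContinuousOn (inversePowerSum s w c p) (Ioi 0) := by
  refine continuousOn_finsetSum _ fun i hi => ?_
  have hpos : ∀ T ∈ Ioi (0 : ℝ), 0 < c i + T := fun T hT => add_pos_of_nonneg_of_pos (hc i hi) hT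
  refine continuousOn_const.div ?_ fun T hT => (rpow_pos_of_pos (hpos T hT) p).ne'
  exact (continuousOn_const.add continuousOn_id).rpow_const fun T hT => .inl (hpos T hT).ne'

lemma strictAntiOn_inversePowerSum (hw : ∀ i ∈ s, 0 ≤ w i) (hc : ∀ i ∈ s, 0 ≤ c i)
    (hw' : ∃ i ∈ s, 0 < w i) (hp : 0 < p) :
    StrictAntiOn (inversePowerSum s w c p) (Ioi 0) := by
  intro x (hx : 0 < x) y _ hxy
  have hpos : ∀ i ∈ s, 0 < (c i + x) ^ p := fun i hi =>
    rpow_pos_of_pos (add_pos_of_nonneg_of_pos (hc i hi) hx) p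
  have hlt : ∀ i ∈ s, (c i + x) ^ p < (c i + y) ^ p := fun i hi =>
    rpow_lt_rpow (add_nonneg (hc i hi) hx.le) (by gcongr) hp
  obtain ⟨k, hk, hwk⟩ := hw'
  refine Finset.sum_lt_sum (fun i hi => ?_) ⟨k, hk, ?_⟩
  · exact div_le_div_of_nonneg_left (hw i hi) (hpos i hi) (hlt i hi).le
  · exact div_lt_div_of_pos_left hwk (hpos k hk) (hlt k hk)

lemma inversePowerSum_pos (hw : ∀ i ∈ s, 0 ≤ w i) (hc : ∀ i ∈ s, 0 ≤ c i)
    (hw' : ∃ i ∈ s, 0 < w i) {T : ℝ} (hT : 0 < T) : 0 < inversePowerSum s w c p T := by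
  have hpos : ∀ i ∈ s, 0 < (c i + T) ^ p := fun i hi =>
    rpow_pos_of_pos (add_pos_of_nonneg_of_pos (hc i hi) hT) p
  obtain ⟨k, hk, hwk⟩ := hw'
  exact Finset.sum_pos' (fun i hi => div_nonneg (hw i hi) (hpos i hi).le)
    ⟨k, hk, div_pos hwk (hpos k hk)⟩

lemma tendsto_inversePowerSum_atTop (hp : 0 < p) :
    Tendsto (inversePowerSum s w c p) atTop (𝓝 0) := by
  have hterm : ∀ i ∈ s, Tendsto (fun T => w i / (c i + T) ^ p) atTop (𝓝 0) := fun i _ =>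
    ((tendsto_rpow_atTop hp).comp (tendsto_atTop_add_const_left _ _ tendsto_id)).const_div_atTop _
  exact Finset.sum_const_zero (s := s) (M := ℝ) ▸ tendsto_finsetSum s hterm

lemma tendsto_inversePowerSum_nhdsGT_zero (hw : ∀ i ∈ s, 0 ≤ w i) (hc : ∀ i ∈ s, 0 ≤ c i)
    (hpole : ∃ i ∈ s, 0 < w i ∧ c i = 0) (hp : 0 < p) :
    Tendsto (inversePowerSum s w c p) (𝓝[>] 0) atTop := by
  obtain ⟨k, hk, hwk, hck⟩ := hpole
  refine tendsto_atTop_mono' _ ?_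
    ((tendsto_rpow_neg_nhdsGT_zero (neg_lt_zero.2 hp)).const_mul_atTop hwk)
  filter_upwards [self_mem_nhdsWithin] with T (hT : 0 < T)
  calc w k * T ^ (-p) = w k / (c k + T) ^ p := by
        rw [hck, zero_add, rpow_neg hT.le, div_eq_mul_inv]
    _ ≤ inversePowerSum s w c p T :=
        Finset.single_le_sum (f := fun i => w i / (c i + T) ^ p)
          (fun i hi => div_nonneg (hw i hi) (rpow_nonneg (add_nonneg (hc i hi) hT.le) p)) hk

lemma bijOn_inversePowerSum (hw : ∀ i ∈ s, 0 ≤ w i) (hc : ∀ i ∈ s, 0 ≤ c i)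
    (hpole : ∃ i ∈ s, 0 < w i ∧ c i = 0) (hp : 0 < p) :
    BijOn (inversePowerSum s w c p) (Ioi 0) (Ioi 0) := by
  have hw' : ∃ i ∈ s, 0 < w i := hpole.imp fun _ h => ⟨h.1, h.2.1⟩
  refine ⟨fun T hT => inversePowerSum_pos hw hc hw' hT,
    (strictAntiOn_inversePowerSum hw hc hw' hp).injOn, ?_⟩
  exact isPreconnected_Ioi.intermediate_value_Ioi (le_principal_iff.2 (Ioi_mem_atTop 0))
    (le_principal_iff.2 self_mem_nhdsWithin) (continuousOn_inversePowerSum hc)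
    (tendsto_inversePowerSum_atTop hp) (tendsto_inversePowerSum_nhdsGT_zero hw hc hpole hp)

end InversePowerSums

lemma bijOn_tan_sq : BijOn (fun φ => tan φ ^ 2) (Ioo 0 (π / 2)) (Ioi 0) := by
  have htan : ∀ φ ∈ Ioo 0 (π / 2), 0 < tan φ := fun φ hφ =>
    tan_pos_of_pos_of_lt_pi_div_two hφ.1 hφ.2
  refine ⟨fun φ hφ => pow_pos (htan φ hφ) 2, fun φ hφ ψ hψ h => ?_, fun T hT => ?_⟩
  · have hsub : Ioo 0 (π / 2) ⊆ Ioo (-(π / 2)) (π / 2) :=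
      Ioo_subset_Ioo_left (neg_nonpos.2 pi_div_two_pos.le)
    exact injOn_tan (hsub hφ) (hsub hψ) ((sq_eq_sq₀ (htan φ hφ).le (htan ψ hψ).le).1 h)
  · refine ⟨arctan √T, ⟨arctan_pos.2 (sqrt_pos.2 hT), arctan_lt_pi_div_two _⟩, ?_⟩
    simp only [tan_arctan, sq_sqrt (le_of_lt hT)]

lemma sin_natCast_mul_pi_div_pos {j l : ℕ} (hj : 0 < j) (hjl : j < l) :
    0 < sin (j * π / l) := by
  have hl : (0 : ℝ) < l := by exact_mod_cast hj.trans hjl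
  refine sin_pos_of_pos_of_lt_pi (by positivity) ((div_lt_iff₀ hl).2 ?_)
  rw [mul_comm]
  gcongr

lemma sum_sin_natCast_mul_pi_div_rpow_pos {l : ℕ} (hl : 2 ≤ l) (q : ℝ) :
    0 < ∑ j ∈ Finset.Icc 1 (l - 1), sin (j * π / l) ^ q := by
  refine Finset.sum_pos (fun j hj => ?_) (Finset.nonempty_Icc.2 (by omega))
  rw [Finset.mem_Icc] at hj
  exact rpow_pos_of_pos (sin_natCast_mul_pi_div_pos (by omega) (by omega)) q

lemma bijOn_sum_cos_sq_div_sin_sq_add_rpow {l : ℕ} (hl : l ≠ 0) {p : ℝ} (hp : 0 < p) :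
    BijOn (fun T => ∑ j ∈ Finset.Icc 1 l, cos (j * π / l) ^ 2 / (sin (j * π / l) ^ 2 + T) ^ p)
      (Ioi 0) (Ioi 0) := by
  refine bijOn_inversePowerSum (fun _ _ => sq_nonneg _) (fun _ _ => sq_nonneg _)
    ⟨l, Finset.mem_Icc.2 (by omega), ?_⟩ hp
  have hangle : (l : ℝ) * π / l = π := mul_div_cancel_left₀ π (Nat.cast_ne_zero.2 hl)
  simp [hangle]

lemma sum_Icc_one_reflect {M : Type*} [AddCommMonoid M] {f : ℕ → M} {n : ℕ} (hf : f n = f 0) :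
    ∑ j ∈ Finset.Icc 1 n, f (n - j) = ∑ j ∈ Finset.Icc 1 n, f j := by
  obtain rfl | hn := n.eq_zero_or_pos
  · rfl
  calc ∑ j ∈ Finset.Icc 1 n, f (n - j)
      = ∑ j ∈ Finset.Ico 0 n, f j := by
        simpa [Finset.Ico_add_one_right_eq_Icc] using Finset.sum_Ico_reflect f 1 (le_refl (n + 1))
    _ = f n + ∑ j ∈ Finset.Ico 1 n, f j := by rw [Finset.sum_eq_sum_Ico_succ_bot hn, hf]
    _ = ∑ j ∈ Finset.Icc 1 n, f j := by
        rw [add_comm, ← Finset.sum_Ico_succ_top hn, Nat.succ_eq_add_one, zero_add,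
          Finset.Ico_add_one_right_eq_Icc]

lemma sum_Icc_neg_of_periodic {M : Type*} [AddCommMonoid M] {g : ℝ → M} {c : ℝ}
    (hg : Function.Periodic g c) (l : ℕ) :
    ∑ j ∈ Finset.Icc 1 l, g (-(j * c / l)) = ∑ j ∈ Finset.Icc 1 l, g (j * c / l) := by
  obtain rfl | hl := eq_or_ne l 0
  · rfl
  have hl' : (l : ℝ) ≠ 0 := Nat.cast_ne_zero.2 hl
  have hend : g ((l : ℕ) * c / l) = g ((0 : ℕ) * c / l) := by
    rw [mul_div_cancel_left₀ c hl', hg.eq, Nat.cast_zero, zero_mul, zero_div]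
  rw [← sum_Icc_one_reflect (f := fun j : ℕ => g (j * c / l)) hend]
  refine Finset.sum_congr rfl fun j hj => ?_
  rw [← hg, Nat.cast_sub (Finset.mem_Icc.1 hj).2]
  congr 1
  field_simp
  ring

lemma dihedralU_even (l : ℕ) (α φ : ℝ) : Function.Even fun θ => dihedralU l α θ φ := by
  intro θ
  have hperiodic : Function.Periodic
      (fun x => (sin (x - θ) ^ 2 + tan φ ^ 2) ^ (-α / 2)) π := fun x => by
    simp only [add_sub_right_comm, sin_add_pi, neg_sq]
  have hreflect : ∀ x, sin (x - -θ) ^ 2 = sin (-x - θ) ^ 2 := fun x => by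
    rw [← neg_sq, ← sin_neg]; ring_nf
  simp only [dihedralU, hreflect]
  rw [sum_Icc_neg_of_periodic hperiodic]

lemma differentiable_dihedralU (l : ℕ) (α : ℝ) {φ : ℝ} (hφ : tan φ ≠ 0) :
    Differentiable ℝ fun θ => dihedralU l α θ φ := by
  have hpos : ∀ x, sin x ^ 2 + tan φ ^ 2 ≠ 0 := fun x => by positivity
  unfold dihedralU
  refine .const_mul (.const_add _ (.fun_sum fun j _ => .rpow_const (by fun_prop) ?_)) _
  exact fun θ => .inl (hpos _)

lemma hasDerivAt_zero_of_even {F : Type*} [NormedAddCommGroup F] [NormedSpace ℝ F] {f : ℝ → F}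
    (hf : f.Even) (hdiff : DifferentiableAt ℝ f 0) : HasDerivAt f 0 0 := by
  have hneg : deriv f 0 = -deriv f 0 := by
    simpa only [hf.eq, neg_zero] using deriv_comp_neg f 0
  have : IsAddTorsionFree F := .of_isTorsionFree ℝ F
  exact self_eq_neg.1 hneg ▸ hdiff.hasDerivAt

lemma hasDerivAt_two_mul_cos_rpow_neg (α : ℝ) {φ : ℝ} (hφ : cos φ ≠ 0) :
    HasDerivAt (fun φ => (2 * cos φ) ^ (-α)) ((2 * cos φ) ^ (-α) * (α * tan φ)) φ := by
  have h2cos : 2 * cos φ ≠ 0 := mul_ne_zero two_ne_zero hφ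
  refine (((hasDerivAt_cos φ).const_mul 2).rpow_const (.inl h2cos)).congr_deriv ?_
  rw [rpow_sub_one h2cos, tan_eq_sin_div_cos]
  field_simp

lemma hasDerivAt_add_tan_sq_rpow (α : ℝ) {c φ : ℝ} (hφ : cos φ ≠ 0) (hc : 0 < c + tan φ ^ 2) :
    HasDerivAt (fun φ => (c + tan φ ^ 2) ^ (-α / 2))
      (-(α * tan φ) * ((1 + tan φ ^ 2) / (c + tan φ ^ 2) ^ (α / 2 + 1))) φ := by
  refine ((((hasDerivAt_tan hφ).fun_pow 2).const_add c).rpow_const (.inl hc.ne')).congr_deriv ?_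
  have hsec : 1 / cos φ ^ 2 = 1 + tan φ ^ 2 := by
    rw [← inv_one_add_tan_sq hφ, one_div, inv_inv]
  rw [show -α / 2 - 1 = -(α / 2 + 1) by ring, rpow_neg hc.le, hsec]
  push_cast
  ring

lemma hasDerivAt_two_mul_cos_rpow_mul_add_tan_sq_rpow (α : ℝ) {c φ : ℝ} (hφ : cos φ ≠ 0)
    (hc : 0 < c + tan φ ^ 2) :
    HasDerivAt (fun φ => (2 * cos φ) ^ (-α) * (c + tan φ ^ 2) ^ (-α / 2))
      (-((2 * cos φ) ^ (-α) * (α * tan φ) * ((1 - c) / (c + tan φ ^ 2) ^ (α / 2 + 1)))) φ := by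
  refine ((hasDerivAt_two_mul_cos_rpow_neg α hφ).fun_mul
    (hasDerivAt_add_tan_sq_rpow α hφ hc)).congr_deriv ?_
  have hpow : (c + tan φ ^ 2) ^ (-α / 2) =
      (c + tan φ ^ 2) / (c + tan φ ^ 2) ^ (α / 2 + 1) := by
    rw [show -α / 2 = 1 - (α / 2 + 1) by ring, rpow_sub hc, rpow_one]
  rw [hpow]
  ring

lemma hasDerivAt_dihedralU_phi (l : ℕ) (α θ : ℝ) {φ : ℝ} (hφ : tan φ ≠ 0) :
    HasDerivAt (fun φ => dihedralU l α θ φ)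
      ((2 * cos φ) ^ (-α) * (α * tan φ) *
        ((∑ j ∈ Finset.Icc 1 (l - 1), sin (j * π / l) ^ (-α)) -
          ∑ j ∈ Finset.Icc 1 l, cos (j * π / l - θ) ^ 2 /
            (sin (j * π / l - θ) ^ 2 + tan φ ^ 2) ^ (α / 2 + 1))) φ := by
  have hcos : cos φ ≠ 0 := fun h => hφ (by rw [tan_eq_sin_div_cos, h, div_zero])
  simp only [dihedralU, mul_add, Finset.mul_sum (Finset.Icc 1 l)]
  refine (((hasDerivAt_two_mul_cos_rpow_neg α hcos).mul_const _).fun_add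
    (.fun_sum fun (j : ℕ) _ => hasDerivAt_two_mul_cos_rpow_mul_add_tan_sq_rpow α hcos
      (show 0 < sin (j * π / l - θ) ^ 2 + tan φ ^ 2 by positivity))).congr_deriv ?_
  simp only [← cos_sq', Finset.sum_neg_distrib, ← Finset.mul_sum]
  ring

theorem prism_central_configuration_general (l : ℕ) (hl : 2 ≤ l)
    (α β : ℝ) (hα : -2 < α) (hβ : β = α / 2)
    (f₀ : ℝ → ℝ)
    (hf₀ : ∀ φ, f₀ φ =
      (∑ j ∈ Finset.Icc 1 (l - 1), sin (j * π / l) ^ (-α)) -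
        ∑ j ∈ Finset.Icc 1 l,
          cos (j * π / l) ^ 2 / (sin (j * π / l) ^ 2 + tan φ ^ 2) ^ (β + 1)) :
    (∃! φhat : ℝ, φhat ∈ Ioo 0 (π / 2) ∧ f₀ φhat = 0) ∧
    ∀ φhat : ℝ, φhat ∈ Ioo 0 (π / 2) → f₀ φhat = 0 →
      HasDerivAt (fun t => dihedralU l α t φhat) 0 0 ∧
      HasDerivAt (fun p => dihedralU l α 0 p) 0 φhat := by
  subst hβ
  refine ⟨?_, fun φ hφ hroot => ?_⟩
  · have hbij := (bijOn_sum_cos_sq_div_sin_sq_add_rpow (l := l) (by omega)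
      (show 0 < α / 2 + 1 by linarith)).comp bijOn_tan_sq
    obtain ⟨φ, hφ, hφA⟩ := hbij.surjOn (sum_sin_natCast_mul_pi_div_rpow_pos hl (-α))
    refine ⟨φ, ⟨hφ, (hf₀ φ).trans (sub_eq_zero.2 hφA.symm)⟩, fun ψ ⟨hψ, hroot⟩ => ?_⟩
    exact hbij.injOn hψ hφ ((sub_eq_zero.1 ((hf₀ ψ).symm.trans hroot)).symm.trans hφA.symm)
  · have htan : tan φ ≠ 0 := (tan_pos_of_pos_of_lt_pi_div_two hφ.1 hφ.2).ne'
    refine ⟨hasDerivAt_zero_of_even (dihedralU_even l α φ)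
      (differentiable_dihedralU l α htan 0),
      (hasDerivAt_dihedralU_phi l α 0 htan).congr_deriv ?_⟩
    simp only [sub_zero]
    rw [← hf₀, hroot, mul_zero]

theorem prism_central_configuration (l : ℕ) (hl : 2 ≤ l)
    (α β : ℝ) (hα : α ∈ Set.Ioo (0 : ℝ) 2) (hβ : β = α / 2)
    (f₀ : ℝ → ℝ)
    (hf₀ : ∀ φ, f₀ φ =
      (∑ j ∈ Finset.Icc 1 (l - 1), Real.sin ((j : ℝ) * Real.pi / l) ^ (-α)) -
        ∑ j ∈ Finset.Icc 1 l,
          Real.cos ((j : ℝ) * Real.pi / l) ^ 2 /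
            (Real.sin ((j : ℝ) * Real.pi / l) ^ 2 + Real.tan φ ^ 2) ^ (β + 1)) :
    (∃! φhat : ℝ, φhat ∈ Set.Ioo 0 (Real.pi / 2) ∧ f₀ φhat = 0) ∧
    ∀ φhat : ℝ, φhat ∈ Set.Ioo 0 (Real.pi / 2) → f₀ φhat = 0 →
      deriv (fun t => dihedralU l α t φhat) 0 = 0 ∧
      deriv (fun p => dihedralU l α 0 p) φhat = 0 := by
  have h := prism_central_configuration_general l hl α β (by linarith [hα.1]) hβ f₀ hf₀
  exact h.imp_right fun h φ hφ hroot => (h φ hφ hroot).imp HasDerivAt.deriv HasDerivAt.deriv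
end

section
/- For every integer l ≥ 2 and every β ∈ (0,1), one has Σ_{j=1}^{l} cos²((2j−1)π/(2l)) / ( sin((2j−1)π/(2l)) )^{2(β+1)} > Σ_{j=1}^{l−1} ( sin(jπ/l) )^{−2β}. -/
open Real Finset

/-!
Write `x = π / (2 * l)`. The angles `j * π / l` of the right-hand sum lie strictly between `x` and
`π - x`, so that sum is less than `(l - 1) * sin x ^ (-2β)`. The term `j = 1` of the left-hand sum
equals `cot x ^ 2 * sin x ^ (-2β)` and the other terms are nonnegative, so `l - 1 ≤ cot x ^ 2`
suffices. This is `sin x ^ 2 ≤ 1 / l`, which follows from the chord bound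
`1 - 4 * x / π ≤ cos (2 * x)` on `[0, π / 4]`.
-/

lemma sin_lt_sin_of_mem_Ioo {x t : ℝ} (hx : -(π / 2) ≤ x) (ht : t ∈ Set.Ioo x (π - x)) :
    sin x < sin t := by
  obtain ⟨hxt, htx⟩ := ht
  rcases le_total t (π / 2) with h | h
  · exact sin_lt_sin_of_lt_of_le_pi_div_two hx h hxt
  · rw [← sin_pi_sub t]
    exact sin_lt_sin_of_lt_of_le_pi_div_two hx (by linarith) (by linarith)

lemma sin_sq_le_two_div_pi_mul {x : ℝ} (hx : 0 ≤ x) (hx' : x ≤ π / 4) :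
    sin x ^ 2 ≤ 2 / π * x := by
  have chord : 1 - 2 / π * (2 * x) ≤ cos (2 * x) :=
    one_sub_mul_le_cos (by linarith) (by linarith)
  rw [sin_sq_eq_half_sub]
  linarith

lemma sin_pi_div_two_mul_pos {l : ℝ} (hl : 1 / 2 < l) : 0 < sin (π / (2 * l)) :=
  sin_pos_of_pos_of_lt_pi (div_pos pi_pos (by linarith)) (div_lt_self pi_pos (by linarith))

lemma sub_one_le_cot_sq {l : ℝ} (hl : 2 ≤ l) : l - 1 ≤ cot (π / (2 * l)) ^ 2 := by
  have hl₀ : 0 < l := by linarith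
  have hsin : 0 < sin (π / (2 * l)) := sin_pi_div_two_mul_pos (by linarith)
  have hsq : sin (π / (2 * l)) ^ 2 ≤ 1 / l := by
    calc sin (π / (2 * l)) ^ 2 ≤ 2 / π * (π / (2 * l)) :=
          sin_sq_le_two_div_pi_mul (by positivity)
            (div_le_div_of_nonneg_left pi_pos.le (by norm_num) (by linarith))
      _ = 1 / l := by field_simp
  rw [le_div_iff₀ hl₀] at hsq
  rw [cot_eq_cos_div_sin, div_pow, le_div_iff₀ (pow_pos hsin 2), cos_sq']
  linarith

lemma cos_sq_div_sin_rpow {x : ℝ} (hx : 0 < sin x) (β : ℝ) :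
    cos x ^ 2 / sin x ^ (2 * (β + 1)) = cot x ^ 2 * sin x ^ (-(2 * β)) := by
  have hexp : 2 * (β + 1) = 2 * β + (2 : ℕ) := by push_cast; ring
  rw [hexp, rpow_add_natCast hx.ne', rpow_neg hx.le, cot_eq_cos_div_sin]
  field_simp

lemma sin_pi_div_two_mul_lt_sin_mul_pi_div {l t : ℝ} (ht : 1 / 2 < t) (htl : t < l - 1 / 2) :
    sin (π / (2 * l)) < sin (t * π / l) := by
  have hl : 0 < l := by linarith
  have hx : 0 < π / (2 * l) := by positivity
  refine sin_lt_sin_of_mem_Ioo (by linarith [pi_pos]) ⟨?_, ?_⟩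
  · calc π / (2 * l) = 1 / 2 * π / l := by ring
      _ < t * π / l := by gcongr
  · calc t * π / l < (l - 1 / 2) * π / l := by gcongr
      _ = π - π / (2 * l) := by field_simp

lemma sum_sin_rpow_lt {l : ℕ} (hl : 2 ≤ l) {p : ℝ} (hp : p < 0) :
    ∑ j ∈ Icc 1 (l - 1), sin (j * π / l) ^ p < (l - 1) * sin (π / (2 * l)) ^ p := by
  have hl' : (2 : ℝ) ≤ l := by exact_mod_cast hl
  have hsin : 0 < sin (π / (2 * l)) := sin_pi_div_two_mul_pos (by linarith)
  calc ∑ j ∈ Icc 1 (l - 1), sin (j * π / l) ^ p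
      < ∑ _j ∈ Icc 1 (l - 1), sin (π / (2 * l)) ^ p := by
        refine sum_lt_sum_of_nonempty (nonempty_Icc.2 (by lia)) fun j hj => ?_
        obtain ⟨hj₁, hjl⟩ := mem_Icc.1 hj
        have hj₁' : (1 : ℝ) ≤ j := by exact_mod_cast hj₁
        have hjl' : (j : ℝ) + 1 ≤ l := by exact_mod_cast (by lia : j + 1 ≤ l)
        exact rpow_lt_rpow_of_neg hsin
          (sin_pi_div_two_mul_lt_sin_mul_pi_div (by linarith) (by linarith)) hp
    _ = (l - 1) * sin (π / (2 * l)) ^ p := by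
        rw [sum_const, Nat.card_Icc, Nat.add_sub_cancel, nsmul_eq_mul,
          Nat.cast_pred (by lia)]

lemma cos_sq_div_sin_rpow_le_sum {l : ℕ} (hl : 1 ≤ l) (p : ℝ) :
    cos (π / (2 * l)) ^ 2 / sin (π / (2 * l)) ^ p ≤
      ∑ j ∈ Icc 1 l,
        cos ((2 * (j : ℝ) - 1) * π / (2 * l)) ^ 2 / sin ((2 * (j : ℝ) - 1) * π / (2 * l)) ^ p := by
  have hnonneg : ∀ j ∈ Icc 1 l, 0 ≤
      cos ((2 * (j : ℝ) - 1) * π / (2 * l)) ^ 2 / sin ((2 * (j : ℝ) - 1) * π / (2 * l)) ^ p := by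
    intro j hj
    obtain ⟨hj₁, hjl⟩ := mem_Icc.1 hj
    have hj₁' : (1 : ℝ) ≤ j := by exact_mod_cast hj₁
    have hjl' : (j : ℝ) ≤ l := by exact_mod_cast hjl
    have hcoeff : 0 ≤ 2 * (j : ℝ) - 1 := by linarith
    have hangle : (2 * (j : ℝ) - 1) * π / (2 * l) ≤ π := by
      rw [div_le_iff₀ (by linarith), mul_comm π]
      gcongr
      linarith
    have hsin := sin_nonneg_of_nonneg_of_le_pi (by positivity) hangle
    positivity
  have hfirst : (2 * ((1 : ℕ) : ℝ) - 1) * π = π := by norm_num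
  simpa only [hfirst] using single_le_sum hnonneg (mem_Icc.2 ⟨le_rfl, hl⟩)

theorem antiprism_key_inequality_general (l : ℕ) (hl : 2 ≤ l) (β : ℝ) (hβ : 0 < β) :
    ∑ j ∈ Icc 1 l,
        cos ((2 * (j : ℝ) - 1) * π / (2 * l)) ^ 2 /
          sin ((2 * (j : ℝ) - 1) * π / (2 * l)) ^ (2 * (β + 1))
      > ∑ j ∈ Icc 1 (l - 1), sin ((j : ℝ) * π / l) ^ (-(2 * β)) := by
  have hl' : (2 : ℝ) ≤ l := by exact_mod_cast hl
  have hsin : 0 < sin (π / (2 * l)) := sin_pi_div_two_mul_pos (by linarith)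
  calc ∑ j ∈ Icc 1 (l - 1), sin ((j : ℝ) * π / l) ^ (-(2 * β))
      < (l - 1) * sin (π / (2 * l)) ^ (-(2 * β)) := sum_sin_rpow_lt hl (by linarith)
    _ ≤ cot (π / (2 * l)) ^ 2 * sin (π / (2 * l)) ^ (-(2 * β)) := by
        gcongr
        exact sub_one_le_cot_sq hl'
    _ = cos (π / (2 * l)) ^ 2 / sin (π / (2 * l)) ^ (2 * (β + 1)) :=
        (cos_sq_div_sin_rpow hsin β).symm
    _ ≤ _ := cos_sq_div_sin_rpow_le_sum (by lia) _

theorem antiprism_key_inequality (l : ℕ) (hl : 2 ≤ l) (β : ℝ) (hβ : β ∈ Set.Ioo (0 : ℝ) 1) :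
    ∑ j ∈ Finset.Icc 1 l,
        Real.cos ((2 * (j : ℝ) - 1) * Real.pi / (2 * l)) ^ 2 /
          Real.sin ((2 * (j : ℝ) - 1) * Real.pi / (2 * l)) ^ (2 * (β + 1))
      > ∑ j ∈ Finset.Icc 1 (l - 1), Real.sin ((j : ℝ) * Real.pi / l) ^ (-(2 * β)) :=
  antiprism_key_inequality_general l hl β hβ.1
end

section
/- Suppose (θ, φ) with φ ∈ (−π/2, π/2) is not a collision point and is a critical point of U, i.e. ∂U/∂θ(θ, φ) = 0 and ∂U/∂φ(θ, φ) = 0. Then sin(2lθ) = 0, that is, θ = kπ/(2l) for some integer k. Hence every central configuration of the dihedral problem is (up to the symmetries of U) a planar regular 2l-gon (φ = 0, θ ∈ π/(2l) + (π/l)ℤ), a prism (θ ∈ (π/l)ℤ, φ ≠ 0), or an antiprism (θ ∈ π/(2l) + (π/l)ℤ, φ ≠ 0). -/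
open Real Finset

/-!
Up to constants, `U` depends on `θ` through `∑ⱼ (c - cos yⱼ) ^ (-α / 2)`, where `c = 1 + 2 tan² φ`
and the angles `yⱼ = y + 2πj / l` are equally spaced, with `l y = -2lθ` modulo `2π`. Its derivative
in `y` is proportional to `∑ⱼ sin yⱼ (c - cos yⱼ) ^ (-α / 2 - 1)`. The powers are superpositions
of the rational functions `(c + u - cos yⱼ) ^ (-2)`, `u > 0`, with positive weights, so it is enough
to find the sign of `∑ⱼ sin yⱼ / (z - cos yⱼ) ^ 2` for `z = cosh η > 1`. Factoring
`X ^ l - exp (i l y)` over the roots of unity gives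
`∏ⱼ (2 cosh η - 2 cos yⱼ) = 2 cosh (l η) - 2 cos (l y)`; differentiating its logarithm in `η` and
then in `y` shows that the sum is a positive multiple of `sin (l y)`.
-/

section RegularPolygon

variable {l : ℕ} {η : ℝ}

lemma normSq_exp_sub_exp_mul_I (a b : ℝ) :
    Complex.normSq (Complex.exp a - Complex.exp (b * Complex.I)) =
      exp a * (2 * cosh a - 2 * cos b) := by
  have hexp : exp a * exp (-a) = 1 := by rw [← exp_add, add_neg_cancel, exp_zero]
  rw [← Complex.ofReal_exp, Complex.exp_mul_I, ← Complex.ofReal_cos, ← Complex.ofReal_sin,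
    Complex.normSq_apply, cosh_eq]
  simp only [Complex.sub_re, Complex.sub_im, Complex.add_re, Complex.add_im, Complex.ofReal_re,
    Complex.ofReal_im, Complex.mul_re, Complex.mul_im, Complex.I_re, Complex.I_im]
  linear_combination sin_sq_add_cos_sq b - hexp

lemma exp_pow_sub_exp_eq_prod (hl : l ≠ 0) (η y : ℝ) :
    Complex.exp (l * η : ℝ) - Complex.exp ((l * y : ℝ) * Complex.I) =
      ∏ j ∈ range l,
        (Complex.exp η - Complex.exp ((y + 2 * π * j / l : ℝ) * Complex.I)) := by
  have hroot : Complex.exp (y * Complex.I) ^ l = Complex.exp ((l * y : ℝ) * Complex.I) := by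
    rw [← Complex.exp_nat_mul]
    push_cast
    ring_nf
  have hfactor := congrArg (Polynomial.eval (Complex.exp η)) <|
    X_pow_sub_C_eq_prod (Complex.isPrimitiveRoot_exp l hl) (Nat.pos_of_ne_zero hl) hroot
  simp only [Polynomial.eval_sub, Polynomial.eval_pow, Polynomial.eval_X, Polynomial.eval_C,
    Polynomial.eval_prod] at hfactor
  rw [Complex.ofReal_mul, Complex.ofReal_natCast, Complex.exp_nat_mul, hfactor]
  refine prod_congr rfl fun j _ ↦ ?_
  rw [← Complex.exp_nat_mul, ← Complex.exp_add]
  push_cast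
  ring_nf

lemma prod_two_mul_cosh_sub_two_mul_cos (hl : l ≠ 0) (η y : ℝ) :
    ∏ j ∈ range l, (2 * cosh η - 2 * cos (y + 2 * π * j / l)) =
      2 * cosh (l * η) - 2 * cos (l * y) := by
  have hnorm := congrArg Complex.normSq (exp_pow_sub_exp_eq_prod hl η y)
  simp only [map_prod, normSq_exp_sub_exp_mul_I, prod_mul_distrib, prod_const, card_range,
    ← exp_nat_mul] at hnorm
  exact (mul_left_cancel₀ (exp_pos _).ne' hnorm).symm

lemma cosh_sub_cos_pos (hη : η ≠ 0) (x : ℝ) : 0 < cosh η - cos x :=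
  sub_pos.2 ((cos_le_one x).trans_lt (one_lt_cosh.2 hη))

lemma sum_inv_cosh_sub_cos (hl : l ≠ 0) (hη : η ≠ 0) (y : ℝ) :
    ∑ j ∈ range l, (cosh η - cos (y + 2 * π * j / l))⁻¹ =
      l * sinh (l * η) / sinh η * (cosh (l * η) - cos (l * y))⁻¹ := by
  have hfactor (x : ℝ) : HasDerivAt (fun t ↦ 2 * cosh t - 2 * cos x) (2 * sinh η) η :=
    ((hasDerivAt_cosh η).const_mul 2).sub_const _
  have hprod : HasDerivAt (fun t ↦ 2 * cosh (l * t) - 2 * cos (l * y))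
      (2 * (sinh (l * η) * (l * 1))) η :=
    ((((hasDerivAt_id η).const_mul (l : ℝ)).cosh).const_mul 2).sub_const _
  have hlog : ∑ j ∈ range l, logDeriv (fun t ↦ 2 * cosh t - 2 * cos (y + 2 * π * j / l)) η =
      logDeriv (fun t ↦ 2 * cosh (l * t) - 2 * cos (l * y)) η := by
    rw [← logDeriv_prod, funext fun t ↦ prod_two_mul_cosh_sub_two_mul_cos hl t y]
    · exact fun j _ ↦ by linarith [cosh_sub_cos_pos hη (y + 2 * π * j / l)]
    · exact fun j _ ↦ (hfactor _).differentiableAt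
  simp only [logDeriv_apply, (hfactor _).deriv, hprod.deriv] at hlog
  simp only [← mul_sub, mul_div_mul_left _ _ (two_ne_zero' ℝ), div_eq_mul_inv (sinh η),
    ← mul_sum] at hlog
  have hsinh : sinh η ≠ 0 := sinh_ne_zero.2 hη
  rw [← mul_right_inj' hsinh, hlog]
  field_simp

lemma sum_sin_div_cosh_sub_cos_sq (hl : l ≠ 0) (hη : η ≠ 0) (y : ℝ) :
    ∑ j ∈ range l, sin (y + 2 * π * j / l) / (cosh η - cos (y + 2 * π * j / l)) ^ 2 =
      l ^ 2 * sinh (l * η) / sinh η / (cosh (l * η) - cos (l * y)) ^ 2 * sin (l * y) := by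
  have hlη : l * η ≠ 0 := mul_ne_zero (Nat.cast_ne_zero.2 hl) hη
  have hsum : HasDerivAt (fun x ↦ ∑ j ∈ range l, (cosh η - cos (x + 2 * π * j / l))⁻¹)
      (∑ j ∈ range l, -(-(-sin (y + 2 * π * j / l) * 1)) /
        (cosh η - cos (y + 2 * π * j / l)) ^ 2) y :=
    HasDerivAt.fun_sum fun j _ ↦
      ((((hasDerivAt_id y).add_const _).cos).const_sub _).inv (cosh_sub_cos_pos hη _).ne'
  have hclosed : HasDerivAt
      (fun x ↦ l * sinh (l * η) / sinh η * (cosh (l * η) - cos (l * x))⁻¹)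
      (l * sinh (l * η) / sinh η *
        (-(-(-sin (l * y) * (l * 1))) / (cosh (l * η) - cos (l * y)) ^ 2)) y :=
    (((((hasDerivAt_id y).const_mul (l : ℝ)).cos).const_sub _).inv
      (cosh_sub_cos_pos hlη _).ne').const_mul _
  rw [funext fun x ↦ sum_inv_cosh_sub_cos hl hη x] at hsum
  have hderiv := hsum.unique hclosed
  simp only [neg_neg, mul_one, neg_div, sum_neg_distrib, neg_mul, mul_neg, neg_inj] at hderiv
  rw [hderiv]
  ring

lemma exists_pos_sum_sin_div_sub_cos_sq_eq_mul_sin (hl : l ≠ 0) {z : ℝ} (hz : 1 < z) (y : ℝ) :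
    ∃ C > 0, ∑ j ∈ range l, sin (y + 2 * π * j / l) / (z - cos (y + 2 * π * j / l)) ^ 2 =
      C * sin (l * y) := by
  obtain ⟨η, hη, rfl⟩ : ∃ η > 0, cosh η = z := ⟨arcosh z, arcosh_pos hz, cosh_arcosh hz.le⟩
  have hl_pos : (0 : ℝ) < l := Nat.cast_pos.2 (Nat.pos_of_ne_zero hl)
  have hlη := mul_pos hl_pos hη
  refine ⟨_, ?_, sum_sin_div_cosh_sub_cos_sq hl hη.ne' y⟩
  exact div_pos (div_pos (mul_pos (pow_pos hl_pos 2) (sinh_pos_iff.2 hlη)) (sinh_pos_iff.2 hη))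
    (pow_pos (cosh_sub_cos_pos hlη.ne' _) 2)

lemma cos_add_lt_one_of_sin_mul_ne_zero (hl : l ≠ 0) {y : ℝ} (hy : sin (l * y) ≠ 0) (j : ℕ) :
    cos (y + 2 * π * j / l) < 1 := by
  refine (cos_le_one _).lt_of_ne fun hcos ↦ hy ?_
  obtain ⟨n, hn⟩ := (cos_eq_one_iff _).1 hcos
  have hly : l * y = (2 * (l * n - j) : ℤ) * π := by
    rw [eq_sub_of_add_eq hn.symm]
    push_cast
    field_simp
  rw [hly, sin_int_mul_pi]

end RegularPolygon

section StieltjesTransform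

open MeasureTheory

variable {p x : ℝ}

lemma integrableOn_rpow_div_add_sq (hp₁ : -1 < p) (hp₂ : p < 1) (hx : 0 < x) :
    IntegrableOn (fun u ↦ u ^ p / (x + u) ^ 2) (Set.Ioi 0) := by
  have hmeas : Measurable (fun u : ℝ ↦ u ^ p / (x + u) ^ 2) := by fun_prop
  rw [← Set.Ioc_union_Ioi_eq_Ioi (zero_le_one' ℝ)]
  refine IntegrableOn.union ?near_zero ?near_infinity
  case near_zero =>
    have hbound : IntegrableOn (fun u : ℝ ↦ u ^ p / x ^ 2) (Set.Ioc 0 1) :=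
      ((intervalIntegrable_iff_integrableOn_Ioc_of_le zero_le_one).1
        (intervalIntegral.intervalIntegrable_rpow' hp₁)).div_const _
    refine hbound.mono' hmeas.aestronglyMeasurable ?_
    filter_upwards [self_mem_ae_restrict measurableSet_Ioc] with u hu
    have hu_pos : 0 < u := hu.1
    rw [norm_of_nonneg (by positivity)]
    gcongr
    linarith
  case near_infinity =>
    have hbound : IntegrableOn (fun u : ℝ ↦ u ^ (p - 2)) (Set.Ioi 1) :=
      integrableOn_Ioi_rpow_of_lt (by linarith) one_pos
    refine hbound.mono' hmeas.aestronglyMeasurable ?_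
    filter_upwards [self_mem_ae_restrict measurableSet_Ioi] with u hu
    have hu_pos : 0 < u := one_pos.trans hu
    rw [norm_of_nonneg (by positivity), rpow_sub hu_pos, rpow_two]
    gcongr
    linarith

lemma integral_rpow_div_add_sq (p : ℝ) (hx : 0 < x) :
    ∫ u in Set.Ioi (0 : ℝ), u ^ p / (x + u) ^ 2 =
      x ^ (p - 1) * ∫ u in Set.Ioi (0 : ℝ), u ^ p / (1 + u) ^ 2 := by
  have hscale : ∫ u in Set.Ioi (0 : ℝ), (x * u) ^ p / (x + x * u) ^ 2 =
      x ^ p / x ^ 2 * ∫ u in Set.Ioi (0 : ℝ), u ^ p / (1 + u) ^ 2 := by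
    rw [← integral_const_mul]
    refine setIntegral_congr_fun measurableSet_Ioi fun u (hu : 0 < u) ↦ ?_
    simp only [mul_rpow hx.le hu.le]
    field_simp
  have hsubst := integral_comp_mul_left_Ioi (fun u : ℝ ↦ u ^ p / (x + u) ^ 2) 0 hx
  rw [hscale, mul_zero, smul_eq_mul, eq_inv_mul_iff_mul_eq₀ hx.ne'] at hsubst
  rw [← hsubst, rpow_sub_one hx.ne']
  field_simp

lemma sum_mul_rpow_pos_of_sum_div_add_sq_pos {ι : Type*} {s : Finset ι} {w x : ι → ℝ}
    (hp₁ : -1 < p) (hp₂ : p < 1) (hx : ∀ i ∈ s, 0 < x i)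
    (hw : ∀ u > 0, 0 < ∑ i ∈ s, w i / (x i + u) ^ 2) :
    0 < ∑ i ∈ s, w i * x i ^ (p - 1) := by
  have hintegrable : ∀ i ∈ s, IntegrableOn (fun u ↦ w i * (u ^ p / (x i + u) ^ 2)) (Set.Ioi 0) :=
    fun i hi ↦ (integrableOn_rpow_div_add_sq hp₁ hp₂ (hx i hi)).const_mul _
  have hpos : ∀ u ∈ Set.Ioi (0 : ℝ), 0 < ∑ i ∈ s, w i * (u ^ p / (x i + u) ^ 2) := by
    intro u hu
    have hfactor : ∑ i ∈ s, w i * (u ^ p / (x i + u) ^ 2) =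
        u ^ p * ∑ i ∈ s, w i / (x i + u) ^ 2 := by
      rw [mul_sum]
      exact sum_congr rfl fun i _ ↦ by ring
    rw [hfactor]
    exact mul_pos (rpow_pos_of_pos hu p) (hw u hu)
  have hintegral : 0 < ∫ u in Set.Ioi (0 : ℝ), ∑ i ∈ s, w i * (u ^ p / (x i + u) ^ 2) := by
    rw [setIntegral_pos_iff_support_of_nonneg_ae
      (ae_restrict_of_forall_mem measurableSet_Ioi fun u hu ↦ (hpos u hu).le)
      (integrable_finsetSum _ hintegrable),
      Set.inter_eq_right.2 fun u hu ↦ Function.mem_support.2 (hpos u hu).ne', volume_Ioi]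
    exact ENNReal.zero_lt_top
  have heval : ∫ u in Set.Ioi (0 : ℝ), ∑ i ∈ s, w i * (u ^ p / (x i + u) ^ 2) =
      (∑ i ∈ s, w i * x i ^ (p - 1)) * ∫ u in Set.Ioi (0 : ℝ), u ^ p / (1 + u) ^ 2 := by
    rw [integral_finsetSum _ hintegrable, sum_mul]
    refine sum_congr rfl fun i hi ↦ ?_
    rw [integral_const_mul, integral_rpow_div_add_sq p (hx i hi), mul_assoc]
  refine pos_of_mul_pos_left (heval ▸ hintegral) ?_
  exact setIntegral_nonneg measurableSet_Ioi fun u (hu : 0 < u) ↦ by positivity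

end StieltjesTransform

section RingPotential

variable {l : ℕ} {p c y : ℝ}

/-- The power-law potential of a regular `l`-gon at a point moving on a circle about the axis of
the polygon. Here `y` is the relative angle, and `c - cos (y + 2πj / l)` is the squared distance to
the `j`-th vertex up to a constant factor, so `p = -α / 2` for a potential of exponent `-α`. The
point lies on the circumscribed circle if `c = 1`, and `c > 1` otherwise. -/
noncomputable def ringPotential (l : ℕ) (p c y : ℝ) : ℝ :=
  ∑ j ∈ range l, (c - cos (y + 2 * π * j / l)) ^ p

lemma hasDerivAt_ringPotential (p : ℝ) (hy : ∀ j ∈ range l, cos (y + 2 * π * j / l) < c) :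
    HasDerivAt (ringPotential l p c)
      (p * ∑ j ∈ range l,
        sin (y + 2 * π * j / l) * (c - cos (y + 2 * π * j / l)) ^ (p - 1)) y := by
  rw [mul_sum]
  exact HasDerivAt.fun_sum fun j hj ↦
    (((((hasDerivAt_id' y).add_const (2 * π * j / l)).cos).const_sub c).rpow_const
      (Or.inl (sub_pos.2 (hy j hj)).ne')).congr_deriv (by ring)

lemma sin_mul_sum_sin_mul_rpow_pos (hl : l ≠ 0) (hp₁ : -1 < p) (hp₂ : p < 1) (hc : 1 ≤ c)
    (hy : sin (l * y) ≠ 0) :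
    0 < sin (l * y) * ∑ j ∈ range l,
      sin (y + 2 * π * j / l) * (c - cos (y + 2 * π * j / l)) ^ (p - 1) := by
  simp only [mul_sum, ← mul_assoc]
  refine sum_mul_rpow_pos_of_sum_div_add_sq_pos hp₁ hp₂
    (fun j _ ↦ sub_pos.2 ((cos_add_lt_one_of_sin_mul_ne_zero hl hy j).trans_le hc))
    fun u hu ↦ ?_
  obtain ⟨C, hC, hsum⟩ :=
    exists_pos_sum_sin_div_sub_cos_sq_eq_mul_sin hl (z := c + u) (by linarith) y
  simp only [mul_div_assoc (sin (l * y)), ← mul_sum, sub_add_eq_add_sub, hsum]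
  rw [mul_left_comm]
  exact mul_pos hC (mul_self_pos.2 hy)

lemma deriv_ringPotential_ne_zero (hl : l ≠ 0) (hp₀ : p ≠ 0) (hp : |p| < 1) (hc : 1 ≤ c)
    (hy : sin (l * y) ≠ 0) : deriv (ringPotential l p c) y ≠ 0 := by
  have hcos : ∀ j ∈ range l, cos (y + 2 * π * j / l) < c := fun j _ ↦
    (cos_add_lt_one_of_sin_mul_ne_zero hl hy j).trans_le hc
  rw [(hasDerivAt_ringPotential p hcos).deriv]
  obtain ⟨hp₁, hp₂⟩ := abs_lt.1 hp
  exact mul_ne_zero hp₀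
    (right_ne_zero_of_mul (sin_mul_sum_sin_mul_rpow_pos hl hp₁ hp₂ hc hy).ne')

end RingPotential

section DihedralPotential

variable {l : ℕ} {α θ φ : ℝ}

lemma dihedralU_eq_ringPotential (l : ℕ) (α θ φ : ℝ) :
    dihedralU l α θ φ = (2 * cos φ) ^ (-α) *
      ((∑ j ∈ Icc 1 (l - 1), sin (j * π / l) ^ (-α)) +
        ringPotential l (-α / 2) (1 + 2 * tan φ ^ 2) (2 * π / l - 2 * θ) / 2 ^ (-α / 2)) := by
  rw [dihedralU, ringPotential, sum_div, ← Ico_add_one_right_eq_Icc 1 l, sum_Ico_eq_sum_range,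
    Nat.add_sub_cancel]
  congr 2
  refine sum_congr rfl fun j _ ↦ ?_
  set ψ := ((1 + j : ℕ) : ℝ) * π / l - θ with hψ
  have hangle : 2 * π / l - 2 * θ + 2 * π * j / l = 2 * ψ := by
    rw [hψ]
    push_cast
    ring
  have hbase : 1 + 2 * tan φ ^ 2 - cos (2 * ψ) = 2 * (sin ψ ^ 2 + tan φ ^ 2) := by
    rw [cos_two_mul, cos_sq']
    ring
  rw [hangle, hbase, mul_rpow zero_le_two (by positivity), mul_div_cancel_left₀ _ (by positivity)]

lemma deriv_dihedralU_left (l : ℕ) (α θ φ : ℝ) :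
    deriv (fun t ↦ dihedralU l α t φ) θ = (2 * cos φ) ^ (-α) *
      (-2 * deriv (ringPotential l (-α / 2) (1 + 2 * tan φ ^ 2)) (2 * π / l - 2 * θ) /
        2 ^ (-α / 2)) := by
  simp only [dihedralU_eq_ringPotential, deriv_const_mul_field, deriv_const_add, deriv_div_const]
  rw [deriv_comp_mul_left 2
      (fun s ↦ ringPotential l (-α / 2) (1 + 2 * tan φ ^ 2) (2 * π / l - s)),
    deriv_comp_const_sub, smul_neg, smul_eq_mul, neg_mul]

lemma sin_two_mul_mul_eq_zero_of_deriv_dihedralU_eq_zero (hl : l ≠ 0) (hα₀ : α ≠ 0)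
    (hα : |α| < 2) (hφ : 0 < cos φ) (hθ : deriv (fun t ↦ dihedralU l α t φ) θ = 0) :
    sin (2 * l * θ) = 0 := by
  have hsin : sin (l * (2 * π / l - 2 * θ)) = -sin (2 * l * θ) := by
    rw [← sin_two_pi_sub]
    field_simp
  have hα_half : |-α / 2| < 1 := by
    rw [abs_div, abs_neg, abs_two]
    linarith
  have hcos : (2 * cos φ) ^ (-α) ≠ 0 := by positivity
  have htwo : (2 : ℝ) ^ (-α / 2) ≠ 0 := by positivity
  by_contra hne
  have hring : deriv (ringPotential l (-α / 2) (1 + 2 * tan φ ^ 2)) (2 * π / l - 2 * θ) ≠ 0 :=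
    deriv_ringPotential_ne_zero hl (div_ne_zero (neg_ne_zero.2 hα₀) two_ne_zero) hα_half
      (le_add_of_nonneg_right (by positivity)) (by rwa [hsin, neg_ne_zero])
  rw [deriv_dihedralU_left] at hθ
  exact mul_ne_zero hcos (div_ne_zero (mul_ne_zero (neg_ne_zero.2 two_ne_zero) hring) htwo) hθ

lemma sin_two_mul_mul_eq_zero_iff (hl : l ≠ 0) :
    sin (2 * l * θ) = 0 ↔ ∃ k : ℤ, θ = k * (π / (2 * l)) := by
  rw [sin_eq_zero_iff]
  refine exists_congr fun k ↦ ?_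
  field_simp
  exact eq_comm

lemma int_mul_pi_div_two_mul_eq_or (l : ℕ) (n : ℤ) :
    (∃ k : ℤ, n * (π / (2 * l)) = k * (π / l)) ∨
      ∃ k : ℤ, n * (π / (2 * l)) = π / (2 * l) + k * (π / l) := by
  obtain ⟨k, rfl | rfl⟩ := n.even_or_odd'
  · refine .inl ⟨k, ?_⟩
    push_cast
    field_simp
  · refine .inr ⟨k, ?_⟩
    push_cast
    field_simp
    ring

end DihedralPotential

theorem classification_of_central_configurations_general {l : ℕ} (hl : l ≠ 0) {α θ φ : ℝ}
    (hα₀ : α ≠ 0) (hα : |α| < 2) (hφ : φ ∈ Set.Ioo (-(π / 2)) (π / 2))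
    (hnc : ¬(φ = 0 ∧ ∃ k : ℤ, θ = k * (π / l)))
    (hθ : deriv (fun t ↦ dihedralU l α t φ) θ = 0) :
    sin (2 * l * θ) = 0 ∧ (∃ k : ℤ, θ = k * (π / (2 * l))) ∧
    ((φ = 0 ∧ ∃ k : ℤ, θ = π / (2 * l) + k * (π / l)) ∨
      ((∃ k : ℤ, θ = k * (π / l)) ∧ φ ≠ 0) ∨
      ((∃ k : ℤ, θ = π / (2 * l) + k * (π / l)) ∧ φ ≠ 0)) := by
  have hsin : sin (2 * l * θ) = 0 :=
    sin_two_mul_mul_eq_zero_of_deriv_dihedralU_eq_zero hl hα₀ hα (cos_pos_of_mem_Ioo hφ) hθ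
  obtain ⟨n, rfl⟩ := (sin_two_mul_mul_eq_zero_iff hl).1 hsin
  refine ⟨hsin, ⟨n, rfl⟩, ?_⟩
  rcases int_mul_pi_div_two_mul_eq_or l n with hprism | hanti
  · exact .inr (.inl ⟨hprism, fun hplanar ↦ hnc ⟨hplanar, hprism⟩⟩)
  · by_cases hplanar : φ = 0
    · exact .inl ⟨hplanar, hanti⟩
    · exact .inr (.inr ⟨hanti, hplanar⟩)

theorem classification_of_central_configurations (l : ℕ) (hl : 2 ≤ l)
    (α : ℝ) (hα : α ∈ Set.Ioo (0 : ℝ) 2)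
    (θ φ : ℝ) (hφ : φ ∈ Set.Ioo (-(Real.pi / 2)) (Real.pi / 2))
    (hnc : ¬(φ = 0 ∧ ∃ k : ℤ, θ = (k : ℝ) * (Real.pi / l)))
    (h1 : deriv (fun t => dihedralU l α t φ) θ = 0)
    (h2 : deriv (fun p => dihedralU l α θ p) φ = 0) :
    Real.sin (2 * l * θ) = 0 ∧ (∃ k : ℤ, θ = (k : ℝ) * (Real.pi / (2 * l))) ∧
    ((φ = 0 ∧ ∃ k : ℤ, θ = Real.pi / (2 * l) + (k : ℝ) * (Real.pi / l)) ∨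
      ((∃ k : ℤ, θ = (k : ℝ) * (Real.pi / l)) ∧ φ ≠ 0) ∨
      ((∃ k : ℤ, θ = Real.pi / (2 * l) + (k : ℝ) * (Real.pi / l)) ∧ φ ≠ 0)) := by
  exact classification_of_central_configurations_general (by lia) hα.1.ne'
    (abs_lt.2 ⟨by linarith [hα.1], hα.2⟩) hφ hnc h1
end
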